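/- arXiv:1805.11323 — 2 statements merged into one kernel-verified Lean document; each statement's English description precedes it below -/
import Mathlib

section
/- For every n ≥ 0 and generic tuples ū=(u_1,…,u_n), v̄=(v_1,…,v_n) of complex parameters, the scalar product of Bethe vectors satisfies ⟨0|( t_{21}(ū) t_{12}(v̄) |0⟩ ) = Σ_{w̄ ⇒ {w̄_I, w̄_II}} λ_2(w̄_I)·λ_1(w̄_II)·K_n(ū | w̄_I + c)·\bar{K}_n(ū | w̄_II − c)·f(w̄_I, w̄_II), where w̄ = {ū, v̄} is the combined 2n-tuple and the sum runs over all partitions of w̄ into disjoint subtuples w̄_I, w̄_II with #w̄_I = #w̄_II = n. -/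
open scoped BigOperators

noncomputable section

/-- The rational function `g(u,v) = c/(u-v)`. -/
def gC (c u v : ℂ) : ℂ := c / (u - v)

/-- The rational function `f(u,v) = (u-v+c)/(u-v)`. -/
def fC (c u v : ℂ) : ℂ := (u - v + c) / (u - v)

/-- The rational function `h(u,v) = (u-v+c)/c`. -/
def hC (c u v : ℂ) : ℂ := (u - v + c) / c

/-- A family of parameters is generic if all pairwise differences avoid `0, ±c, ±2c`. -/
def Generic (c : ℂ) {ι : Type*} (w : ι → ℂ) : Prop :=
  ∀ i j, i ≠ j → w i - w j ≠ 0 ∧ w i - w j ≠ c ∧ w i - w j ≠ -c ∧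
    w i - w j ≠ 2 * c ∧ w i - w j ≠ -2 * c

/-- The modified Izergin determinant `K^{(z)}(x̄|ȳ)`. -/
def KIz (c z : ℂ) {ι κ : Type*} [Fintype ι] [Fintype κ] [DecidableEq κ]
    (x : ι → ℂ) (y : κ → ℂ) : ℂ :=
  Matrix.det (Matrix.of fun j k : κ =>
    -z * (if j = k then 1 else 0) +
      (∏ i, fC c (x i) (y j)) * (∏ i ∈ Finset.univ.erase j, fC c (y j) (y i))
        / hC c (y j) (y k))

/-- The conjugated modified Izergin determinant: `c` is replaced by `-c`. -/
def KIzBar (c z : ℂ) {ι κ : Type*} [Fintype ι] [Fintype κ] [DecidableEq κ]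
    (x : ι → ℂ) (y : κ → ℂ) : ℂ :=
  KIz (-c) z x y

/-- Restriction of a tuple to a subtuple indexed by a `Finset`. -/
def restr {p : ℕ} (w : Fin p → ℂ) (s : Finset (Fin p)) : {x // x ∈ s} → ℂ :=
  fun i => w i.1

/-- Double product `f(w̄_s, w̄_t)` over two subtuples of a tuple. -/
def fSS (c : ℂ) {p : ℕ} (w : Fin p → ℂ) (s t : Finset (Fin p)) : ℂ :=
  ∏ i ∈ s, ∏ j ∈ t, fC c (w i) (w j)

/-- Ordered product of operators over a subtuple (the operators pairwise commute,
so the order is irrelevant). -/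
def opProd {V : Type*} [AddCommGroup V] [Module ℂ V] {p : ℕ}
    (op : ℂ → Module.End ℂ V) (w : Fin p → ℂ) (s : Finset (Fin p)) : Module.End ℂ V :=
  ((s.sort (· ≤ ·)).map (fun i => op (w i))).prod

/-- The index subsets of a partition of `Fin p` into three parts. -/
def parts {p : ℕ} (σ : Fin p → Fin 3) (k : Fin 3) : Finset (Fin p) :=
  Finset.univ.filter (fun i => σ i = k)

/-! ### Scalar identities -/

/-- Working form of genericity. -/
def Gen {ι : Type*} (c : ℂ) (w : ι → ℂ) : Prop :=
  c ≠ 0 ∧ ∀ i j, i ≠ j → w i - w j ≠ 0 ∧ w i - w j + c ≠ 0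

theorem Gen.neg {ι : Type*} {c : ℂ} {w : ι → ℂ} (h : Gen c w) : Gen (-c) w := by
  refine ⟨neg_ne_zero.mpr h.1, fun i j hij => ⟨(h.2 i j hij).1, fun h0 => ?_⟩⟩
  apply (h.2 j i hij.symm).2
  linear_combination -h0

theorem Gen.add_ne {ι : Type*} {c : ℂ} {w : ι → ℂ} (h : Gen c w) (i j : ι) :
    w i - w j + c ≠ 0 := by
  by_cases hij : i = j
  · subst hij; simpa using h.1
  · exact (h.2 i j hij).2

/-- `f(w_i,w_j)` as a function of the indices. -/
def ee {ι : Type*} (c : ℂ) (w : ι → ℂ) (i j : ι) : ℂ := fC c (w i) (w j)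

theorem ee_self {ι : Type*} (c : ℂ) (w : ι → ℂ) (i : ι) : ee c w i i = 0 := by
  simp [ee, fC]

theorem ee_neg {ι : Type*} (c : ℂ) (w : ι → ℂ) (i j : ι) : ee (-c) w i j = ee c w j i := by
  unfold ee fC
  rw [← neg_div_neg_eq]
  congr 1 <;> ring

theorem ee_ne {ι : Type*} {c : ℂ} {w : ι → ℂ} (h : Gen c w) {i j : ι} (hij : i ≠ j) :
    ee c w i j ≠ 0 := div_ne_zero (h.2 i j hij).2 (h.2 i j hij).1

theorem ee_inv {ι : Type*} (c : ℂ) (w : ι → ℂ) (i j : ι) :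
    (ee c w i j)⁻¹ = (w i - w j) / (w i - w j + c) := by
  unfold ee fC; rw [inv_div]

/-- Products of `f` over two index sets. -/
def fp {ι : Type*} (c : ℂ) (w : ι → ℂ) (S T : Finset ι) : ℂ := ∏ i ∈ S, ∏ j ∈ T, ee c w i j

set_option linter.unusedSectionVars false

section scal
variable {ι : Type*} [DecidableEq ι] {c : ℂ} {w : ι → ℂ}

theorem fp_insert_left {i : ι} {S T : Finset ι} (hi : i ∉ S) :
    fp c w (insert i S) T = (∏ j ∈ T, ee c w i j) * fp c w S T := by
  unfold fp; rw [Finset.prod_insert hi]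

theorem fp_insert_right {j : ι} {S T : Finset ι} (hj : j ∉ T) :
    fp c w S (insert j T) = (∏ i ∈ S, ee c w i j) * fp c w S T := by
  unfold fp; rw [← Finset.prod_mul_distrib]
  exact Finset.prod_congr rfl fun i _ => Finset.prod_insert hj

theorem fp_neg (S T : Finset ι) : fp (-c) w S T = fp c w T S := by
  unfold fp; rw [Finset.prod_comm]; simp only [ee_neg]

theorem fp_eq_zero {S T : Finset ι} {i : ι} (hS : i ∈ S) (hT : i ∈ T) : fp c w S T = 0 :=
  Finset.prod_eq_zero hS (Finset.prod_eq_zero hT (ee_self c w i))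

theorem fp_empty_left (T : Finset ι) : fp c w ∅ T = 1 := by simp [fp]

theorem fp_empty_right (T : Finset ι) : fp c w T ∅ = 1 := by simp [fp]

theorem pf (h : Gen c w) (B : Finset ι) : ∀ x, x ∉ B →
    ∏ k ∈ B, ee c w k x = 1 + ∑ i ∈ B, c / (w i - w x) * ∏ k ∈ B.erase i, ee c w k i := by
  induction B using Finset.induction_on with
  | empty => intro x _; simp
  | insert b B hb ih =>
    intro x hx
    have hbx : b ≠ x := by rintro rfl; exact hx (Finset.mem_insert_self _ _)
    have hxB : x ∉ B := fun h => hx (Finset.mem_insert_of_mem h)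
    rw [Finset.prod_insert hb, Finset.sum_insert hb, Finset.erase_insert hb]
    have key : ∀ i ∈ B, c / (w i - w x) * ∏ k ∈ (insert b B).erase i, ee c w k i
        = c / (w i - w x) * (∏ k ∈ B.erase i, ee c w k i)
          + c / (w b - w x) * (c / (w i - w x) * ∏ k ∈ B.erase i, ee c w k i)
          - c / (w b - w x) * (c / (w i - w b) * ∏ k ∈ B.erase i, ee c w k i) := by
      intro i hi
      have hib : b ≠ i := by rintro rfl; exact hb hi
      have hix : i ≠ x := by rintro rfl; exact hxB hi
      rw [Finset.erase_insert_of_ne hib, Finset.prod_insert (by simp [hb])]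
      have h1 := (h.2 i b hib.symm).1
      have h1' := (h.2 b i hib).1
      have h2 := (h.2 i x hix).1
      have h3 := (h.2 b x hbx).1
      unfold ee fC
      generalize (∏ k ∈ B.erase i, (w k - w i + c) / (w k - w i)) = P
      have : c / (w i - w x) * ((w b - w i + c) / (w b - w i))
         = c / (w i - w x) + c / (w b - w x) * (c / (w i - w x))
           - c / (w b - w x) * (c / (w i - w b)) := by
        rw [show w i - w b = -(w b - w i) by ring]
        field_simp
        ring
      linear_combination P * this
    rw [Finset.sum_congr rfl key, Finset.sum_sub_distrib, Finset.sum_add_distrib,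
      ← Finset.mul_sum, ← Finset.mul_sum]
    have i1 := ih x hxB
    have i2 := ih b hb
    have : ee c w b x = 1 + c / (w b - w x) := by
      unfold ee fC; field_simp [(h.2 b x hbx).1]
    rw [this]
    linear_combination (1 + c / (w b - w x)) * i1 - (c / (w b - w x)) * i2

theorem sum_left (h : Gen c w) (B : Finset ι) :
    ∑ i ∈ B, ∏ k ∈ B.erase i, ee c w k i = B.card := by
  induction B using Finset.induction_on with
  | empty => simp
  | insert b B hb ih =>
    rw [Finset.sum_insert hb, Finset.erase_insert hb, Finset.card_insert_of_notMem hb]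
    have key : ∀ i ∈ B, ∏ k ∈ (insert b B).erase i, ee c w k i
        = (∏ k ∈ B.erase i, ee c w k i) - (c / (w i - w b) * ∏ k ∈ B.erase i, ee c w k i) := by
      intro i hi
      have hib : b ≠ i := by rintro rfl; exact hb hi
      rw [Finset.erase_insert_of_ne hib, Finset.prod_insert (by simp [hb])]
      have h1' := (h.2 b i hib).1
      have : ee c w b i = 1 - c / (w i - w b) := by
        unfold ee fC
        rw [show w i - w b = -(w b - w i) by ring]
        field_simp
        ring
      rw [this]; ring
    rw [Finset.sum_congr rfl key, Finset.sum_sub_distrib, ih, pf h B b hb]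
    push_cast; ring

theorem sum_right (h : Gen c w) (B : Finset ι) :
    ∑ i ∈ B, ∏ k ∈ B.erase i, ee c w i k = B.card := by
  rw [← sum_left h.neg B]; simp only [ee_neg]

/-- The expansion of the (modified) Izergin determinant over subsets. -/
def phi (c : ℂ) (w : ι → ℂ) (U I : Finset ι) : ℂ :=
  ∑ A ∈ I.powerset, (-1) ^ (I \ A).card * fp c w A (I \ A) * (fp c w A U)⁻¹

/-- Sums over a subset and an element outside. -/
theorem sum_out (I : Finset ι) (F : Finset ι → ι → ℂ) :
    ∑ A ∈ I.powerset, ∑ i ∈ I \ A, F A i = ∑ i ∈ I, ∑ A ∈ (I.erase i).powerset, F A i := by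
  apply Finset.sum_comm'
  intro A i
  simp only [Finset.mem_powerset, Finset.mem_sdiff, Finset.subset_erase]
  tauto

/-- Sums over a subset and an element inside. -/
theorem sum_in (I : Finset ι) (F : Finset ι → ι → ℂ) :
    ∑ A ∈ I.powerset, ∑ i ∈ A, F A i
      = ∑ i ∈ I, ∑ A ∈ (I.erase i).powerset, F (insert i A) i := by
  rw [Finset.sum_sigma', Finset.sum_sigma']
  refine Finset.sum_bij' (fun x _ => ⟨x.2, x.1.erase x.2⟩) (fun x _ => ⟨insert x.1 x.2, x.1⟩)
    ?_ ?_ ?_ ?_ ?_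
  · rintro ⟨A, i⟩ hx
    simp only [Finset.mem_sigma, Finset.mem_powerset] at hx ⊢
    exact ⟨hx.1 hx.2, Finset.erase_subset_erase _ hx.1⟩
  · rintro ⟨i, A⟩ hx
    simp only [Finset.mem_sigma, Finset.mem_powerset, Finset.subset_erase] at hx ⊢
    exact ⟨Finset.insert_subset hx.1 hx.2.1, Finset.mem_insert_self _ _⟩
  · rintro ⟨A, i⟩ hx
    simp only [Finset.mem_sigma, Finset.mem_powerset] at hx
    simp [Finset.insert_erase hx.2]
  · rintro ⟨i, A⟩ hx
    simp only [Finset.mem_sigma, Finset.mem_powerset, Finset.subset_erase] at hx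
    simp [Finset.erase_insert hx.2.2]
  · rintro ⟨A, i⟩ hx
    simp only [Finset.mem_sigma, Finset.mem_powerset] at hx
    simp [Finset.insert_erase hx.2]

theorem phi_empty (h : Gen c w) : ∀ (m : ℕ) (I : Finset ι), I.card = m + 1 → phi c w ∅ I = 0 := by
  intro m
  induction m with
  | zero =>
    intro I hI
    obtain ⟨a, rfl⟩ := Finset.card_eq_one.mp hI
    have : ({a} : Finset ι).powerset = {∅, {a}} := by
      ext s; simp [Finset.subset_singleton_iff]
    rw [phi, this, Finset.sum_pair (by simp)]
    simp [fp]
  | succ m ih =>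
    intro I hI
    have hz : ∀ i ∈ I, phi c w ∅ (I.erase i) = 0 := fun i hi =>
      ih _ (by rw [Finset.card_erase_of_mem hi, hI]; rfl)
    have e1 : ∑ A ∈ I.powerset, ∑ i ∈ I \ A, ((-1) ^ (I \ A).card * fp c w A (I \ A)
        * ∏ k ∈ (I \ A).erase i, ee c w k i) = 0 := by
      rw [sum_out I (fun A i => (-1) ^ (I \ A).card * fp c w A (I \ A)
        * ∏ k ∈ (I \ A).erase i, ee c w k i)]
      apply Finset.sum_eq_zero
      intro i hi
      have : ∀ A ∈ (I.erase i).powerset, (-1) ^ (I \ A).card * fp c w A (I \ A)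
        * ∏ k ∈ (I \ A).erase i, ee c w k i = (-∏ k ∈ I.erase i, ee c w k i) *
          ((-1) ^ ((I.erase i) \ A).card * fp c w A ((I.erase i) \ A) * (fp c w A ∅)⁻¹) := by
        intro A hA
        rw [Finset.mem_powerset] at hA
        have hiA : i ∉ A := (Finset.subset_erase.mp hA).2
        have h1 : I \ A = insert i ((I.erase i) \ A) := by
          ext x; by_cases hx : x = i
          · subst hx; simp [hi, hiA]
          · simp [hx]
        have hni : i ∉ (I.erase i) \ A := by simp
        rw [h1, Finset.card_insert_of_notMem hni, fp_insert_right hni, Finset.erase_insert hni,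
          fp_empty_right, ← Finset.prod_sdiff hA]
        ring
      rw [Finset.sum_congr rfl this, ← Finset.mul_sum]
      have := hz i hi
      unfold phi at this
      rw [this, mul_zero]
    have e2 : ∑ A ∈ I.powerset, ∑ i ∈ A, ((-1) ^ (I \ A).card * fp c w A (I \ A)
        * ∏ k ∈ A.erase i, ee c w i k) = 0 := by
      rw [sum_in I (fun A i => (-1) ^ (I \ A).card * fp c w A (I \ A)
        * ∏ k ∈ A.erase i, ee c w i k)]
      apply Finset.sum_eq_zero
      intro i hi
      have : ∀ A ∈ (I.erase i).powerset, (-1) ^ (I \ insert i A).card * fp c w (insert i A) (I \ insert i A)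
        * ∏ k ∈ (insert i A).erase i, ee c w i k = (∏ k ∈ I.erase i, ee c w i k) *
          ((-1) ^ ((I.erase i) \ A).card * fp c w A ((I.erase i) \ A) * (fp c w A ∅)⁻¹) := by
        intro A hA
        rw [Finset.mem_powerset] at hA
        have hiA : i ∉ A := (Finset.subset_erase.mp hA).2
        have h1 : I \ insert i A = (I.erase i) \ A := by
          ext x; simp; tauto
        rw [h1, fp_insert_left hiA, Finset.erase_insert hiA,
          fp_empty_right, ← Finset.prod_sdiff hA]
        ring
      rw [Finset.sum_congr rfl this, ← Finset.mul_sum]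
      have := hz i hi
      unfold phi at this
      rw [this, mul_zero]
    have e3 : (I.card : ℂ) * phi c w ∅ I = 0 := by
      rw [← add_zero (0 : ℂ)]
      nth_rewrite 1 [← e1]
      rw [← e2, ← Finset.sum_add_distrib, phi, Finset.mul_sum]
      apply Finset.sum_congr rfl
      intro A hA
      rw [← Finset.mul_sum, ← Finset.mul_sum, sum_left h, sum_right h, fp_empty_right,
        ← Finset.card_sdiff_add_card_eq_card (Finset.mem_powerset.mp hA)]
      push_cast; ring
    rcases mul_eq_zero.mp e3 with h0 | h0
    · rw [hI] at h0; exact absurd h0 (Nat.cast_ne_zero.mpr (by omega))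
    · exact h0

theorem izg_inner_sum (h : Gen c w) (B : Finset ι) (x : ι) :
    ∑ i ∈ B, (∏ k ∈ B.erase i, ee c w k i) * (∏ k ∈ B.erase i, ee c w k x)⁻¹ *
      (c / (w i - w x + c)) = 1 - (∏ k ∈ B, ee c w k x)⁻¹ := by
  by_cases hx : x ∈ B
  · rw [Finset.prod_eq_zero (f := fun k => ee c w k x) hx (ee_self c w x), Finset.sum_eq_single x]
    · have : (∏ k ∈ B.erase x, ee c w k x) ≠ 0 :=
        Finset.prod_ne_zero_iff.mpr fun k hk => ee_ne h (Finset.ne_of_mem_erase hk)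
      rw [mul_inv_cancel₀ this, sub_self, zero_add, div_self h.1]; simp
    · intro i hi hix
      rw [Finset.prod_eq_zero (f := fun k => ee c w k x) (Finset.mem_erase.mpr ⟨hix.symm, hx⟩)
        (ee_self c w x)]
      simp
    · intro h; exact absurd hx h
  · have hne : (∏ k ∈ B, ee c w k x) ≠ 0 :=
        Finset.prod_ne_zero_iff.mpr fun k hk => ee_ne h (by rintro rfl; exact hx hk)
    have : ∀ i ∈ B, (∏ k ∈ B.erase i, ee c w k i) * (∏ k ∈ B.erase i, ee c w k x)⁻¹ *
      (c / (w i - w x + c)) = (∏ k ∈ B, ee c w k x)⁻¹ *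
        (c / (w i - w x) * ∏ k ∈ B.erase i, ee c w k i) := by
      intro i hi
      have hix : i ≠ x := by rintro rfl; exact hx hi
      rw [← Finset.mul_prod_erase B (fun k => ee c w k x) hi, mul_inv, ee_inv]
      have h1 := (h.2 i x hix).1
      have h2 := (h.2 i x hix).2
      field_simp
    rw [Finset.sum_congr rfl this, ← Finset.mul_sum]
    have := pf h B x hx
    rw [show (∑ i ∈ B, c / (w i - w x) * ∏ k ∈ B.erase i, ee c w k i)
      = (∏ k ∈ B, ee c w k x) - 1 by rw [this]; ring]
    field_simp

theorem phi_rec_gen (h : Gen c w) (U I : Finset ι) (x : ι) (hx : x ∉ U) :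
    phi c w (insert x U) I = (∏ k ∈ I, ee c w k x)⁻¹ * phi c w U I
      + ∑ i ∈ I, (∏ k ∈ I.erase i, ee c w k i) * (∏ k ∈ I.erase i, ee c w k x)⁻¹ *
        (-c / (w i - w x + c)) * phi c w U (I.erase i) := by
  have e1 : ∑ i ∈ I, (∏ k ∈ I.erase i, ee c w k i) * (∏ k ∈ I.erase i, ee c w k x)⁻¹ *
        (-c / (w i - w x + c)) * phi c w U (I.erase i)
      = ∑ A ∈ I.powerset, ∑ i ∈ I \ A, ((-1) ^ (I \ A).card * fp c w A (I \ A) * (fp c w A U)⁻¹ *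
         (∏ k ∈ A, ee c w k x)⁻¹ * ((∏ k ∈ (I \ A).erase i, ee c w k i) *
           (∏ k ∈ (I \ A).erase i, ee c w k x)⁻¹ * (c / (w i - w x + c)))) := by
    rw [sum_out I (fun A i => ((-1) ^ (I \ A).card * fp c w A (I \ A) * (fp c w A U)⁻¹ *
         (∏ k ∈ A, ee c w k x)⁻¹ * ((∏ k ∈ (I \ A).erase i, ee c w k i) *
           (∏ k ∈ (I \ A).erase i, ee c w k x)⁻¹ * (c / (w i - w x + c)))))]
    apply Finset.sum_congr rfl
    intro i hi
    rw [phi, Finset.mul_sum]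
    apply Finset.sum_congr rfl
    intro A hA
    rw [Finset.mem_powerset] at hA
    have hiA : i ∉ A := (Finset.subset_erase.mp hA).2
    have h1 : I \ A = insert i ((I.erase i) \ A) := by
      ext x; by_cases hx : x = i
      · subst hx; simp [hi, hiA]
      · simp [hx]
    have hni : i ∉ (I.erase i) \ A := by simp
    rw [h1, Finset.card_insert_of_notMem hni, fp_insert_right hni, Finset.erase_insert hni,
      ← Finset.prod_sdiff hA, ← Finset.prod_sdiff hA, mul_inv]
    ring
  rw [e1, phi, phi, Finset.mul_sum, ← Finset.sum_add_distrib]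
  apply Finset.sum_congr rfl
  intro A hA
  rw [← Finset.mul_sum, izg_inner_sum h, fp_insert_right hx, mul_inv,
    ← Finset.prod_sdiff (Finset.mem_powerset.mp hA), mul_inv]
  ring

theorem phi_zero (h : Gen c w) (U : Finset ι) : ∀ I : Finset ι, U.card < I.card →
    phi c w U I = 0 := by
  induction U using Finset.induction_on with
  | empty =>
    intro I hI
    exact phi_empty h (I.card - 1) I (by simp at hI; have := Finset.card_pos.mpr hI; omega)
  | insert x U hx ih =>
    intro I hI
    rw [Finset.card_insert_of_notMem hx] at hI
    rw [phi_rec_gen h U I x hx, ih I (by omega), mul_zero, zero_add]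
    apply Finset.sum_eq_zero
    intro i hi
    rw [ih (I.erase i) (by rw [Finset.card_erase_of_mem hi]; omega), mul_zero]

theorem phi_rec (h : Gen c w) (U I : Finset ι) (x : ι) (hx : x ∉ U) (hI : I.card = U.card + 1) :
    phi c w (insert x U) I =
      ∑ i ∈ I, (∏ k ∈ I.erase i, ee c w k i) * (∏ k ∈ I.erase i, ee c w k x)⁻¹ *
        (-c / (w i - w x + c)) * phi c w U (I.erase i) := by
  rw [phi_rec_gen h U I x hx, phi_zero h U I (by omega), mul_zero, zero_add]

end scal

/-! ### The determinants -/

theorem cauchy_det (c : ℂ) (κ : Type) [inst : Fintype κ] :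
    ∀ [DecidableEq κ] (y : κ → ℂ), Gen c y →
    Matrix.det (Matrix.of fun j k : κ => c / (y j - y k + c))
      = ∏ j, ∏ k, if j = k then 1 else (ee c y j k)⁻¹ := by
  refine Fintype.induction_empty_option (P := fun (κ : Type) [Fintype κ] =>
    ∀ [DecidableEq κ] (y : κ → ℂ), Gen c y →
    Matrix.det (Matrix.of fun j k : κ => c / (y j - y k + c))
      = ∏ j, ∏ k, if j = k then 1 else (ee c y j k)⁻¹) ?_ ?_ ?_ κ
  · intro α β _ e ih _ y hy
    let _ : Fintype α := Fintype.ofEquiv β e.symm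
    classical
    have := ih (fun a => y (e a)) ⟨hy.1, fun i j hij => hy.2 _ _ (e.injective.ne hij)⟩
    rw [← Matrix.det_submatrix_equiv_self e]
    refine Eq.trans (Eq.trans (by rfl) this) ?_
    rw [← Equiv.prod_comp e]
    refine Finset.prod_congr rfl fun j _ => ?_
    rw [← Equiv.prod_comp e]
    refine Finset.prod_congr rfl fun k _ => ?_
    simp [ee]
  · intro _ y hy; simp
  · intro α _ ih _ y hy
    classical
    have hg : Gen c (fun a : α => y (some a)) :=
      ⟨hy.1, fun i j hij => hy.2 _ _ (by simpa using hij)⟩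
    have ih' := ih (fun a => y (some a)) hg
    let e : Unit ⊕ α ≃ Option α := (Equiv.sumComm _ _).trans (Equiv.optionEquivSumPUnit α).symm
    rw [← Matrix.det_submatrix_equiv_self e]
    have hb : (Matrix.of fun j k : Option α => c / (y j - y k + c)).submatrix e e
        = Matrix.fromBlocks 1 (Matrix.of fun (_ : Unit) k => c / (y none - y (some k) + c))
            (Matrix.of fun j (_ : Unit) => c / (y (some j) - y none + c))
            (Matrix.of fun j k => c / (y (some j) - y (some k) + c)) := by
      ext (i | i) (j | j) <;> simp [e, hy.1]
    rw [hb, Matrix.det_fromBlocks_one₁₁]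
    have hs : (Matrix.of fun j k => c / (y (some j) - y (some k) + c))
        - (Matrix.of fun j (_ : Unit) => c / (y (some j) - y none + c)) *
          (Matrix.of fun (_ : Unit) k => c / (y none - y (some k) + c))
        = Matrix.of (fun j k => (ee c y (some j) none)⁻¹ *
            (Matrix.of (fun j k => (ee c y none (some k))⁻¹ *
            (Matrix.of (fun j k : α => c / (y (some j) - y (some k) + c))) j k)) j k) := by
      ext j k
      simp only [Matrix.sub_apply, Matrix.of_apply, Matrix.mul_apply, Finset.univ_unique,
        Finset.sum_singleton, ee_inv]
      have h1 := hy.add_ne (some j) none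
      have h2 := hy.add_ne none (some k)
      have h3 := hy.add_ne (some j) (some k)
      field_simp
      ring
    rw [hs, Matrix.det_mul_column, Matrix.det_mul_row, ih', Fintype.prod_option,
      Fintype.prod_option]
    simp only [Fintype.prod_option, reduceCtorEq, if_false, if_true, one_mul,
      Finset.prod_mul_distrib, Option.some.injEq, ee]
    ring

theorem det_expand {κ : Type*} [Fintype κ] [DecidableEq κ] (a : κ → ℂ) (N : Matrix κ κ ℂ) :
    Matrix.det (Matrix.of fun j k : κ => -1 * (if j = k then 1 else 0) + a j * N j k)
      = ∑ A : Finset κ, (-1) ^ (Aᶜ).card * (∏ j ∈ A, a j) *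
        (N.submatrix (↑) (↑) : Matrix A A ℂ).det := by
  have h0 : (Matrix.of fun j k : κ => -1 * (if j = k then 1 else 0) + a j * N j k)
      = (fun j => a j • N.row j) + (fun j => (-1 : ℂ) • (1 : Matrix κ κ ℂ).row j) := by
    ext j k
    by_cases hjk : j = k <;> simp [Matrix.one_apply, add_comm, hjk]
  rw [h0]
  change Matrix.detRowAlternating _ = _
  rw [AlternatingMap.map_add_univ]
  refine Finset.sum_congr rfl fun A _ => ?_
  have h1 : A.piecewise (fun j => a j • N.row j) (fun j => (-1 : ℂ) • (1 : Matrix κ κ ℂ).row j)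
      = fun j => (if j ∈ A then a j else -1) • (A.piecewise N.row (1 : Matrix κ κ ℂ).row) j := by
    funext j
    by_cases hj : j ∈ A <;> simp [hj]
  rw [h1, AlternatingMap.map_smul_univ]
  have h2 := Matrix.det_piecewise_one_eq_submatrix_det N A
  change Matrix.detRowAlternating _ = _ at h2
  rw [← h2, smul_eq_mul]
  congr 1
  rw [Finset.prod_ite, Finset.prod_const, mul_comm]
  congr 2
  · congr 1; ext; simp
  · congr 1; ext; simp

theorem KIz_eq_phi {p n : ℕ} {c : ℂ} {w : Fin p → ℂ} (h : Gen c w) (u : Fin n → ℂ)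
    (e : Fin n ↪ Fin p) (hu : ∀ i, u i = w (e i)) (s : Finset (Fin p)) :
    KIz c 1 u (fun i => restr w s i + c) = phi c w (Finset.univ.map e) s := by
  have hy : Gen c (fun i : {x // x ∈ s} => w i) :=
    ⟨h.1, fun i j hij => h.2 _ _ (fun h => hij (Subtype.ext h))⟩
  let a : {x // x ∈ s} → ℂ := fun j => (∏ k ∈ Finset.univ.map e, (ee c w j k)⁻¹) *
    ∏ k ∈ s.erase j, ee c w j k
  have h0 : KIz c 1 u (fun i => restr w s i + c) =
     Matrix.det (Matrix.of fun j k : {x // x ∈ s} => -1 * (if j = k then 1 else 0) + a j *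
        (Matrix.of (fun j k : {x // x ∈ s} => c / (w j - w k + c))) j k) := by
    unfold KIz
    congr 1
    ext j k
    simp only [Matrix.of_apply]
    congr 1
    rw [mul_div_assoc, mul_div_assoc', mul_div_assoc']
    have e1 : ∏ i, fC c (u i) (restr w s j + c) = ∏ k ∈ Finset.univ.map e, (ee c w j k)⁻¹ := by
      rw [Finset.prod_map]
      refine Finset.prod_congr rfl fun i _ => ?_
      rw [ee_inv, hu]; unfold fC restr
      rw [← neg_div_neg_eq]
      congr 1 <;> ring
    have e2 : ∏ i ∈ Finset.univ.erase j, fC c (restr w s j + c) (restr w s i + c)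
        = ∏ k ∈ s.erase j, ee c w j k := by
      refine Finset.prod_bij (fun i _ => i.1) ?_ ?_ ?_ ?_
      · intro i hi
        simp at hi ⊢
        exact hi
      · intro i _ j _ h; exact Subtype.ext h
      · intro k hk
        simp at hk
        exact ⟨⟨k, hk.2⟩, by simpa [Subtype.ext_iff] using hk.1, rfl⟩
      · intro i _
        unfold ee fC restr
        congr 1 <;> ring
    rw [e1, e2]
    simp only [a, hC, restr]
    have h3 := h.add_ne j k
    have h4 := h.1
    rw [show w j + c - (w k + c) + c = w j - w k + c by ring]
    field_simp
  rw [h0, det_expand, phi]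
  refine Finset.sum_bij (fun A _ => A.map (Function.Embedding.subtype _)) ?_ ?_ ?_ ?_
  · intro A _
    rw [Finset.mem_powerset]
    intro x hx
    simp at hx
    exact hx.1
  · intro A _ B _ hAB
    exact Finset.map_injective _ hAB
  · intro B hB
    rw [Finset.mem_powerset] at hB
    refine ⟨B.subtype (· ∈ s), Finset.mem_univ _, ?_⟩
    rw [Finset.subtype_map]
    exact Finset.filter_true_of_mem hB
  · intro A _
    set A' := A.map (Function.Embedding.subtype (· ∈ s)) with hA'
    have hsub : A' ⊆ s := by
      intro x hx
      simp [hA'] at hx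
      exact hx.1
    have hcard : (Aᶜ).card = (s \ A').card := by
      rw [Finset.card_compl, Finset.card_sdiff_of_subset hsub, hA', Finset.card_map]; simp
    have hdet : (Matrix.submatrix (Matrix.of (fun j k : {x // x ∈ s} => c / (w j - w k + c)))
        (fun x : A => x.1) (fun x : A => x.1)).det = ∏ j ∈ A', ∏ k ∈ A'.erase j, (ee c w j k)⁻¹ := by
      have := cauchy_det c A (fun i => w i.1.1)
        ⟨h.1, fun i j hij => h.2 _ _ (fun h => hij (Subtype.ext (Subtype.ext h)))⟩
      refine Eq.trans (Eq.trans (by rfl) this) ?_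
      rw [hA', Finset.prod_map, ← Finset.prod_coe_sort A]
      refine Finset.prod_congr rfl fun j _ => ?_
      have : ∏ k ∈ (A.map (Function.Embedding.subtype (· ∈ s))).erase j.1.1, (ee c w j.1.1 k)⁻¹
         = ∏ k ∈ A.map (Function.Embedding.subtype (· ∈ s)),
            if j.1.1 = k then 1 else (ee c w j.1.1 k)⁻¹ := by
        refine Eq.trans ?_ (Finset.prod_subset (Finset.erase_subset j.1.1 _) ?_)
        · refine Finset.prod_congr rfl fun k hk => ?_
          rw [if_neg (Finset.ne_of_mem_erase hk).symm]
        · intro k hk hk'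
          rw [if_pos]
          by_contra hne
          exact hk' (Finset.mem_erase.mpr ⟨fun h => hne h.symm, hk⟩)
      refine Eq.trans ?_ this.symm
      rw [Finset.prod_map, ← Finset.prod_coe_sort A]
      refine Finset.prod_congr rfl fun k _ => ?_
      have : (j = k) ↔ (j.1.1 = k.1.1) := by rw [Subtype.ext_iff, Subtype.ext_iff]
      simp only [ee, this]
      rfl
    have ha : ∏ j ∈ A, a j = ∏ j ∈ A', ((∏ k ∈ Finset.univ.map e, (ee c w j k)⁻¹) *
        ∏ k ∈ s.erase j, ee c w j k) := by
      rw [hA', Finset.prod_map]; rfl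
    rw [hcard, ha, hdet, mul_assoc, mul_assoc, ← Finset.prod_mul_distrib]
    congr 1
    unfold fp
    rw [← Finset.prod_inv_distrib, ← Finset.prod_mul_distrib]
    refine Finset.prod_congr rfl fun j hj => ?_
    have h5 : s.erase j \ A'.erase j = s \ A' := by
      ext x
      by_cases hx : x = j
      · subst hx; simp [hj]
      · simp [hx]
    rw [← Finset.prod_sdiff (Finset.erase_subset_erase j hsub), h5, Finset.prod_inv_distrib,
      Finset.prod_inv_distrib]
    have : (∏ k ∈ A'.erase j, ee c w j k) ≠ 0 :=
      Finset.prod_ne_zero_iff.mpr fun k hk => ee_ne h (Finset.ne_of_mem_erase hk).symm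
    field_simp

/-! ### Actions of the monodromy entries on Bethe vectors -/

section act
variable {ι : Type*} [DecidableEq ι] {c : ℂ} {w : ι → ℂ} {V : Type*} [AddCommGroup V] [Module ℂ V]

theorem B_sum {B : ι → Module.End ℂ V} {BV : Finset ι → V}
    (hBi : ∀ i S, i ∉ S → BV (insert i S) = B i (BV S)) {v : ι} {Y : Finset ι} (hv : v ∉ Y)
    (a a' : ι → ℂ) (h0 : a' v = 0) (ha : ∀ j ∈ Y, a' j = a j) :
    B v (∑ j ∈ Y, a j • BV (Y.erase j))
      = ∑ j ∈ insert v Y, a' j • BV ((insert v Y).erase j) := by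
  rw [Finset.sum_insert hv, h0, zero_smul, zero_add, map_sum]
  refine Finset.sum_congr rfl fun j hj => ?_
  have hvj : v ≠ j := by rintro rfl; exact hv hj
  rw [map_smul, ha j hj, Finset.erase_insert_of_ne hvj, hBi _ _ (by simp [hv])]

theorem A_action (h : Gen c w) (A B : ι → Module.End ℂ V) (BV : Finset ι → V) (l1 : ι → ℂ)
    (hBi : ∀ i S, i ∉ S → BV (insert i S) = B i (BV S))
    (hA0 : ∀ i, A i (BV ∅) = l1 i • BV ∅)
    (hAB : ∀ i j x, i ≠ j → A i (B j x)
      = (1 + c / (w j - w i)) • B j (A i x) - (c / (w j - w i)) • B i (A j x))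
    (W : Finset ι) : ∀ u, u ∉ W → A u (BV W) =
      ∑ j ∈ insert u W, (l1 j * (∏ k ∈ (insert u W).erase j, ee c w k j) *
        (c / (w u - w j + c))) • BV ((insert u W).erase j) := by
  induction W using Finset.induction_on with
  | empty =>
    intro u _
    have := h.1
    simp [hA0, this]
  | insert v W hv ih =>
    intro u hu
    have huv : u ≠ v := by rintro rfl; exact hu (Finset.mem_insert_self _ _)
    have huW : u ∉ W := fun h => hu (Finset.mem_insert_of_mem h)
    have hvY : v ∉ insert u W := by simp [huv.symm, hv]
    set X := insert u (insert v W) with hX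
    have hX' : insert v (insert u W) = X := Finset.insert_comm _ _ _
    rw [hBi v W hv, hAB u v _ huv, ih u huW, ih v hv]
    rw [B_sum hBi hvY _ (fun j => l1 j * ((∏ k ∈ X.erase j, ee c w k j) * (ee c w v j)⁻¹) *
        (c / (w u - w j + c))) (by simp [ee_self])
        (by
          intro j hj
          have hvj : v ≠ j := by rintro rfl; exact hvY hj
          rw [← hX', Finset.erase_insert_of_ne hvj, Finset.prod_insert (by simp [hvY])]
          have := ee_ne h hvj
          field_simp),
      B_sum hBi hu _ (fun j => l1 j * ((∏ k ∈ X.erase j, ee c w k j) * (ee c w u j)⁻¹) *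
        (c / (w v - w j + c))) (by simp [ee_self])
        (by
          intro j hj
          have hvj : u ≠ j := by rintro rfl; exact hu hj
          rw [hX, Finset.erase_insert_of_ne hvj, Finset.prod_insert
            (fun h => hu (Finset.mem_of_mem_erase h))]
          have := ee_ne h hvj
          field_simp),
      hX', ← hX, Finset.smul_sum, Finset.smul_sum, ← Finset.sum_sub_distrib]
    refine Finset.sum_congr rfl fun j _ => ?_
    rw [smul_smul, smul_smul, ← sub_smul]
    congr 1
    rw [ee_inv, ee_inv]
    have h1 := h.add_ne u j
    have h2 := h.add_ne v j
    have h3 := (h.2 v u huv.symm).1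
    field_simp
    ring

theorem D_action (h : Gen c w) (D B : ι → Module.End ℂ V) (BV : Finset ι → V) (l2 : ι → ℂ)
    (hBi : ∀ i S, i ∉ S → BV (insert i S) = B i (BV S))
    (hD0 : ∀ i, D i (BV ∅) = l2 i • BV ∅)
    (hDB : ∀ i j x, i ≠ j → D i (B j x)
      = (1 + c / (w i - w j)) • B j (D i x) - (c / (w i - w j)) • B i (D j x))
    (W : Finset ι) (u : ι) (hu : u ∉ W) : D u (BV W) =
      ∑ j ∈ insert u W, (l2 j * (∏ k ∈ (insert u W).erase j, ee c w j k) *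
        (c / (w j - w u + c))) • BV ((insert u W).erase j) := by
  rw [A_action h.neg D B BV l2 hBi hD0 (fun i j x hij => by
    rw [hDB i j x hij, ← neg_sub (w j) (w i), div_neg, neg_div]) W u hu]
  refine Finset.sum_congr rfl fun j _ => ?_
  simp only [ee_neg]
  congr 2
  rw [← neg_div_neg_eq]
  congr 1 <;> ring

theorem C_action (h : Gen c w) (A B C D : ι → Module.End ℂ V) (BV : Finset ι → V) (l1 l2 : ι → ℂ)
    (hBi : ∀ i S, i ∉ S → BV (insert i S) = B i (BV S))
    (hA0 : ∀ i, A i (BV ∅) = l1 i • BV ∅)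
    (hD0 : ∀ i, D i (BV ∅) = l2 i • BV ∅)
    (hC0 : ∀ i, C i (BV ∅) = 0)
    (hAB : ∀ i j x, i ≠ j → A i (B j x)
      = (1 + c / (w j - w i)) • B j (A i x) - (c / (w j - w i)) • B i (A j x))
    (hDB : ∀ i j x, i ≠ j → D i (B j x)
      = (1 + c / (w i - w j)) • B j (D i x) - (c / (w i - w j)) • B i (D j x))
    (hCB : ∀ i j x, i ≠ j → C i (B j x)
      = B j (C i x) + (c / (w i - w j)) • (A j (D i x) - A i (D j x)))
    (W : Finset ι) : ∀ u, u ∉ W → C u (BV W) =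
      ∑ i ∈ insert u W, ∑ j ∈ (insert u W).erase i,
        (l2 i * l1 j * (∏ k ∈ (insert u W).erase i, ee c w i k) *
          (∏ k ∈ ((insert u W).erase i).erase j, ee c w k j) *
        (c / (w i - w u + c)) * (c / (w u - w j + c))) • BV (((insert u W).erase i).erase j) := by
  induction W using Finset.induction_on with
  | empty => intro u _; simp [hC0]
  | insert v W hv ih =>
    intro u hu
    have huv : u ≠ v := by rintro rfl; exact hu (Finset.mem_insert_self _ _)
    have huW : u ∉ W := fun h => hu (Finset.mem_insert_of_mem h)
    have hvY : v ∉ insert u W := by simp [huv.symm, hv]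
    set X := insert u (insert v W) with hX
    have hX' : insert v (insert u W) = X := Finset.insert_comm _ _ _
    have hXY : ∀ i ∈ insert u W, insert v ((insert u W).erase i) = X.erase i := by
      intro i hi
      have hvi : v ≠ i := by rintro rfl; exact hvY hi
      rw [← hX', Finset.erase_insert_of_ne hvi]
    have hXZ : ∀ i ∈ insert v W, insert u ((insert v W).erase i) = X.erase i := by
      intro i hi
      have hvi : u ≠ i := by rintro rfl; exact hu hi
      rw [hX, Finset.erase_insert_of_ne hvi]
    have t1 : B v (C u (BV W)) = ∑ i ∈ X, ∑ j ∈ X.erase i, (l2 i * l1 j *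
        ((∏ k ∈ X.erase i, ee c w i k) * (ee c w i v)⁻¹) *
          ((∏ k ∈ (X.erase i).erase j, ee c w k j) * (ee c w v j)⁻¹) *
        (c / (w i - w u + c)) * (c / (w u - w j + c))) • BV ((X.erase i).erase j) := by
      rw [ih u huW, ← hX', Finset.sum_insert hvY]
      rw [Finset.sum_eq_zero (s := (insert v (insert u W)).erase v) (by
        intro j _; simp [ee_self]), zero_add, map_sum]
      refine Finset.sum_congr rfl fun i hi => ?_
      have hvi : v ≠ i := by rintro rfl; exact hvY hi
      have hvYi : v ∉ (insert u W).erase i := fun h => hvY (Finset.mem_of_mem_erase h)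
      rw [Finset.erase_insert_of_ne hvi]
      refine B_sum hBi hvYi _ _ (by simp [ee_self]) ?_
      intro j hj
      have hvj : v ≠ j := by rintro rfl; exact hvYi hj
      have hvYj : v ∉ ((insert u W).erase i).erase j := fun h => hvYi (Finset.mem_of_mem_erase h)
      rw [Finset.prod_insert hvYi, Finset.erase_insert_of_ne hvj, Finset.prod_insert hvYj]
      have h1 := ee_ne h hvj
      have h2 := ee_ne h hvi.symm
      field_simp
    have t2 : A v (D u (BV W)) = ∑ i ∈ X, ∑ j ∈ X.erase i, (l2 i * l1 j *
        ((∏ k ∈ X.erase i, ee c w i k) * (ee c w i v)⁻¹) *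
          ((∏ k ∈ (X.erase i).erase j, ee c w k j)) *
        (c / (w i - w u + c)) * (c / (w v - w j + c))) • BV ((X.erase i).erase j) := by
      rw [D_action h D B BV l2 hBi hD0 hDB W u huW, ← hX', Finset.sum_insert hvY]
      rw [Finset.sum_eq_zero (s := (insert v (insert u W)).erase v) (by
        intro j _; simp [ee_self]), zero_add, map_sum]
      refine Finset.sum_congr rfl fun i hi => ?_
      have hvi : v ≠ i := by rintro rfl; exact hvY hi
      have hvYi : v ∉ (insert u W).erase i := fun h => hvY (Finset.mem_of_mem_erase h)
      rw [map_smul, A_action h A B BV l1 hBi hA0 hAB _ v hvYi, Finset.erase_insert_of_ne hvi,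
        Finset.smul_sum]
      refine Finset.sum_congr rfl fun j hj => ?_
      rw [smul_smul, Finset.prod_insert hvYi]
      congr 1
      have h2 := ee_ne h hvi.symm
      field_simp
    have t3 : A u (D v (BV W)) = ∑ i ∈ X, ∑ j ∈ X.erase i, (l2 i * l1 j *
        ((∏ k ∈ X.erase i, ee c w i k) * (ee c w i u)⁻¹) *
          ((∏ k ∈ (X.erase i).erase j, ee c w k j)) *
        (c / (w i - w v + c)) * (c / (w u - w j + c))) • BV ((X.erase i).erase j) := by
      rw [D_action h D B BV l2 hBi hD0 hDB W v hv, hX, Finset.sum_insert hu]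
      rw [Finset.sum_eq_zero (s := (insert u (insert v W)).erase u) (by
        intro j _; simp [ee_self]), zero_add, map_sum]
      refine Finset.sum_congr rfl fun i hi => ?_
      have hvi : u ≠ i := by rintro rfl; exact hu hi
      have hvYi : u ∉ (insert v W).erase i := fun h => hu (Finset.mem_of_mem_erase h)
      rw [map_smul, A_action h A B BV l1 hBi hA0 hAB _ u hvYi, Finset.erase_insert_of_ne hvi,
        Finset.smul_sum]
      refine Finset.sum_congr rfl fun j hj => ?_
      rw [smul_smul, Finset.prod_insert hvYi]
      congr 1
      have h2 := ee_ne h hvi.symm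
      field_simp
    rw [hBi v W hv, hCB u v _ huv, t1, t2, t3, ← Finset.sum_sub_distrib, Finset.smul_sum,
      ← Finset.sum_add_distrib]
    refine Finset.sum_congr rfl fun i _ => ?_
    rw [← Finset.sum_sub_distrib, Finset.smul_sum, ← Finset.sum_add_distrib]
    refine Finset.sum_congr rfl fun j _ => ?_
    rw [← sub_smul, smul_smul, ← add_smul]
    congr 1
    rw [ee_inv, ee_inv, ee_inv]
    have h1 := h.add_ne u j
    have h2 := h.add_ne v j
    have h3 := (h.2 u v huv).1
    have h4 := h.add_ne i u
    have h5 := h.add_ne i v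
    generalize (∏ k ∈ X.erase i, ee c w i k) = P
    generalize (∏ k ∈ (X.erase i).erase j, ee c w k j) = Q
    field_simp
    ring

theorem reindex (n : ℕ) (x : ι) (X : Finset ι) (F : Finset ι → ι → V)
    (hF : ∀ I i, x ∈ I → F I i = 0) :
    ∑ I' ∈ Finset.powersetCard (n + 1) (insert x X), ∑ i ∈ I', F (I'.erase i) i
      = ∑ I ∈ Finset.powersetCard n X, ∑ i ∈ (insert x X) \ I, F I i := by
  have e1 : ∑ I ∈ Finset.powersetCard n X, ∑ i ∈ (insert x X) \ I, F I i
      = ∑ I ∈ Finset.powersetCard n (insert x X), ∑ i ∈ (insert x X) \ I, F I i := by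
    refine Finset.sum_subset (Finset.powersetCard_mono (Finset.subset_insert _ _)) ?_
    intro I hI hI'
    refine Finset.sum_eq_zero fun i _ => hF I i ?_
    by_contra hx
    apply hI'
    rw [Finset.mem_powersetCard] at hI ⊢
    exact ⟨(Finset.subset_insert_iff_of_notMem hx).mp hI.1, hI.2⟩
  rw [e1, Finset.sum_sigma', Finset.sum_sigma']
  refine Finset.sum_bij' (fun p _ => ⟨p.1.erase p.2, p.2⟩) (fun p _ => ⟨insert p.2 p.1, p.2⟩)
    ?_ ?_ ?_ ?_ ?_
  · rintro ⟨I, i⟩ hp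
    simp only [Finset.mem_sigma, Finset.mem_powersetCard, Finset.mem_sdiff] at hp ⊢
    refine ⟨⟨(Finset.erase_subset _ _).trans hp.1.1, ?_⟩, hp.1.1 hp.2, by simp⟩
    rw [Finset.card_erase_of_mem hp.2, hp.1.2]; rfl
  · rintro ⟨I, i⟩ hp
    simp only [Finset.mem_sigma, Finset.mem_powersetCard, Finset.mem_sdiff] at hp ⊢
    refine ⟨⟨Finset.insert_subset hp.2.1 hp.1.1, ?_⟩, Finset.mem_insert_self _ _⟩
    rw [Finset.card_insert_of_notMem hp.2.2, hp.1.2]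
  · rintro ⟨I, i⟩ hp
    simp only [Finset.mem_sigma] at hp
    simp [Finset.insert_erase hp.2]
  · rintro ⟨I, i⟩ hp
    simp only [Finset.mem_sigma, Finset.mem_sdiff] at hp
    simp [Finset.erase_insert hp.2.2]
  · rintro ⟨I, i⟩ hp
    rfl

end act

section multi
variable {ι : Type*} [DecidableEq ι] {c : ℂ} {w : ι → ℂ} {V : Type*} [AddCommGroup V] [Module ℂ V]

theorem coef_step (h : Gen c w) {x i j : ι} {I J Z R : Finset ι} (a b : ℂ)
    (hiI : i ∉ I) (hjJ : j ∉ J) (hij : i ≠ j) (hxZ : x ∉ Z) (hxI : x ∉ I) (hxJ : x ∉ J)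
    (hiR : i ∉ R) (hjR : j ∉ R) (hY : insert x Z = insert i (insert j R)) :
    ((∏ k ∈ I, ee c w k i) * (∏ k ∈ I, ee c w k x)⁻¹ * (-c / (w i - w x + c)) * a) *
      ((∏ k ∈ J, ee (-c) w k j) * (∏ k ∈ J, ee (-c) w k x)⁻¹ * (-(-c) / (w j - w x + -c)) * b) *
      fp c w (insert i I) (insert j J) * fp c w (insert i I) R * fp c w R (insert j J)
    = a * b * fp c w I J * fp c w I Z * fp c w Z J *
      ((∏ k ∈ (insert x Z).erase i, ee c w i k) *
          (∏ k ∈ ((insert x Z).erase i).erase j, ee c w k j) *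
        (c / (w i - w x + c)) * (c / (w x - w j + c))) := by
  have hiY : i ∉ insert j R := by simp [hij, hiR]
  have e1 : fp c w I (insert x Z) = fp c w I (insert i (insert j R)) := by rw [hY]
  have e2 : fp c w (insert x Z) J = fp c w (insert i (insert j R)) J := by rw [hY]
  rw [fp_insert_right hxZ, fp_insert_right hiY, fp_insert_right hjR] at e1
  rw [fp_insert_left hxZ, fp_insert_left hiY, fp_insert_left hjR] at e2
  rw [hY, Finset.erase_insert hiY, Finset.erase_insert hjR, Finset.prod_insert hjR,
    fp_insert_left hiI, fp_insert_right hjJ, fp_insert_left hiI, fp_insert_right hjJ,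
    Finset.prod_insert hjJ]
  simp only [ee_neg]
  have n1 : (∏ k ∈ I, ee c w k x) ≠ 0 :=
    Finset.prod_ne_zero_iff.mpr fun k hk => ee_ne h (by rintro rfl; exact hxI hk)
  have n2 : (∏ k ∈ J, ee c w x k) ≠ 0 :=
    Finset.prod_ne_zero_iff.mpr fun k hk => ee_ne h (by rintro rfl; exact hxJ hk)
  have e1' : fp c w I Z = (∏ k ∈ I, ee c w k x)⁻¹ *
    ((∏ k ∈ I, ee c w k i) * ((∏ k ∈ I, ee c w k j) * fp c w I R)) := by
    rw [← e1, inv_mul_cancel_left₀ n1]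
  have e2' : fp c w Z J = (∏ k ∈ J, ee c w x k)⁻¹ *
    ((∏ k ∈ J, ee c w i k) * ((∏ k ∈ J, ee c w j k) * fp c w R J)) := by
    rw [← e2, inv_mul_cancel_left₀ n2]
  have e3 : -(-c) / (w j - w x + -c) = - (c / (w x - w j + c)) := by
    rw [← neg_div_neg_eq, neg_div]
    congr 2
    · ring
    · ring
  rw [e1', e2', e3, neg_div]
  ring

theorem multi_action (h : Gen c w) (C : ι → Module.End ℂ V)
    (BV : Finset ι → V) (CV : Finset ι → Module.End ℂ V) (l1 l2 : ι → ℂ)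
    (hC : ∀ W u, u ∉ W → C u (BV W) =
      ∑ i ∈ insert u W, ∑ j ∈ (insert u W).erase i,
        (l2 i * l1 j * (∏ k ∈ (insert u W).erase i, ee c w i k) *
          (∏ k ∈ ((insert u W).erase i).erase j, ee c w k j) *
        (c / (w i - w u + c)) * (c / (w u - w j + c))) • BV (((insert u W).erase i).erase j))
    (hC0 : CV ∅ = 1) (hCi : ∀ i S, i ∉ S → CV (insert i S) = C i * CV S)
    (W U : Finset ι) : Disjoint U W → CV U (BV W) =
      ∑ I ∈ Finset.powersetCard U.card (U ∪ W), ∑ J ∈ Finset.powersetCard U.card (U ∪ W),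
        ((∏ i ∈ I, l2 i) * (∏ j ∈ J, l1 j) * (phi c w U I * phi (-c) w U J * fp c w I J *
          fp c w I ((U ∪ W) \ (I ∪ J)) * fp c w ((U ∪ W) \ (I ∪ J)) J)) •
          BV ((U ∪ W) \ (I ∪ J)) := by
  induction U using Finset.induction_on with
  | empty =>
    intro _
    simp [hC0, phi, fp]
  | insert x U hx ih =>
    intro hd
    rw [Finset.disjoint_insert_left] at hd
    rw [hCi x U hx, Module.End.mul_apply, ih hd.2, Finset.card_insert_of_notMem hx,
      Finset.insert_union]
    set X := U ∪ W with hX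
    have hxX : x ∉ X := by simp [hX, hx, hd.1]
    set n := U.card with hn
    -- the right-hand side
    let al : Finset ι → ι → ℂ := fun I i => (∏ k ∈ I, ee c w k i) * (∏ k ∈ I, ee c w k x)⁻¹ *
        (-c / (w i - w x + c)) * phi c w U I
    let be : Finset ι → ι → ℂ := fun J j => (∏ k ∈ J, ee (-c) w k j) *
        (∏ k ∈ J, ee (-c) w k x)⁻¹ * (-(-c) / (w j - w x + -c)) * phi (-c) w U J
    let R : Finset ι → Finset ι → Finset ι := fun I J => (insert x X) \ (I ∪ J)
    let G : Finset ι → ι → Finset ι → ι → V := fun I i J j =>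
      ((∏ i ∈ insert i I, l2 i) * (∏ j ∈ insert j J, l1 j) * (al I i * be J j *
        fp c w (insert i I) (insert j J) * fp c w (insert i I) (R (insert i I) (insert j J)) *
        fp c w (R (insert i I) (insert j J)) (insert j J))) • BV (R (insert i I) (insert j J))
    have hal : ∀ I i, x ∈ I → al I i = 0 := by
      intro I i hI
      simp only [al]
      rw [Finset.prod_eq_zero (f := fun k => ee c w k x) hI (ee_self c w x)]
      simp
    have hbe : ∀ J j, x ∈ J → be J j = 0 := by
      intro J j hJ
      simp only [be]
      rw [Finset.prod_eq_zero (f := fun k => ee (-c) w k x) hJ (ee_self (-c) w x)]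
      simp
    have rhs : ∑ I ∈ Finset.powersetCard (n + 1) (insert x X),
        ∑ J ∈ Finset.powersetCard (n + 1) (insert x X),
        ((∏ i ∈ I, l2 i) * (∏ j ∈ J, l1 j) * (phi c w (insert x U) I * phi (-c) w (insert x U) J *
          fp c w I J * fp c w I ((insert x X) \ (I ∪ J)) * fp c w ((insert x X) \ (I ∪ J)) J)) •
          BV ((insert x X) \ (I ∪ J))
        = ∑ I ∈ Finset.powersetCard n X, ∑ J ∈ Finset.powersetCard n X,
          ∑ i ∈ (insert x X) \ I, ∑ j ∈ (insert x X) \ J, G I i J j := by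
      have s1 : ∀ I ∈ Finset.powersetCard n X, ∑ J ∈ Finset.powersetCard n X,
          ∑ i ∈ (insert x X) \ I, ∑ j ∈ (insert x X) \ J, G I i J j
          = ∑ i ∈ (insert x X) \ I, ∑ J ∈ Finset.powersetCard (n + 1) (insert x X),
            ∑ j ∈ J, G I i (J.erase j) j := by
        intro I _
        rw [Finset.sum_comm]
        refine Finset.sum_congr rfl fun i _ => ?_
        rw [reindex n x X (fun J j => G I i J j)]
        intro J j hJ
        simp only [G, hbe J j hJ]
        simp
      rw [Finset.sum_congr rfl s1]
      rw [← reindex n x X (fun I i => ∑ J ∈ Finset.powersetCard (n + 1) (insert x X),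
            ∑ j ∈ J, G I i (J.erase j) j)]
      swap
      · intro I i hI
        refine Finset.sum_eq_zero fun J _ => Finset.sum_eq_zero fun j _ => ?_
        simp only [G, hal I i hI]
        simp
      refine Finset.sum_congr rfl fun I hI => ?_
      rw [Finset.sum_comm]
      refine Finset.sum_congr rfl fun J hJ => ?_
      rw [phi_rec h U I x hx (Finset.mem_powersetCard.mp hI).2,
        phi_rec h.neg U J x hx (Finset.mem_powersetCard.mp hJ).2, Finset.sum_mul_sum,
        Finset.sum_mul, Finset.sum_mul, Finset.sum_mul, Finset.mul_sum, Finset.sum_smul]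
      refine Finset.sum_congr rfl fun i hi => ?_
      rw [Finset.sum_mul, Finset.sum_mul, Finset.sum_mul, Finset.mul_sum, Finset.sum_smul]
      refine Finset.sum_congr rfl fun j hj => ?_
      simp only [G, al, be, R, Finset.insert_erase hi, Finset.insert_erase hj]
    rw [rhs, map_sum]
    refine Finset.sum_congr rfl fun I hI => ?_
    rw [map_sum]
    refine Finset.sum_congr rfl fun J hJ => ?_
    rw [map_smul]
    by_cases hIJ : Disjoint I J
    swap
    · obtain ⟨k, hkI, hkJ⟩ := Finset.not_disjoint_iff.mp hIJ
      rw [fp_eq_zero hkI hkJ]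
      simp only [mul_zero, zero_mul, zero_smul]
      symm
      refine Finset.sum_eq_zero fun i _ => Finset.sum_eq_zero fun j _ => ?_
      simp only [G]
      rw [fp_eq_zero (Finset.mem_insert_of_mem hkI) (Finset.mem_insert_of_mem hkJ)]
      simp
    have hIX := (Finset.mem_powersetCard.mp hI).1
    have hJX := (Finset.mem_powersetCard.mp hJ).1
    have hxI : x ∉ I := fun h => hxX (hIX h)
    have hxJ : x ∉ J := fun h => hxX (hJX h)
    set Z := X \ (I ∪ J) with hZ
    have hxZ : x ∉ Z := fun h => hxX (Finset.mem_sdiff.mp h).1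
    have memY : ∀ k, k ∈ insert x Z ↔ k ∈ insert x X ∧ k ∉ I ∧ k ∉ J := by
      intro k
      by_cases hk : k = x
      · subst hk; simp [hxI, hxJ]
      · simp [hZ, hk]
    have r1 : ∑ i ∈ (insert x X) \ I, ∑ j ∈ (insert x X) \ J, G I i J j
        = ∑ i ∈ insert x Z, ∑ j ∈ (insert x Z).erase i, G I i J j := by
      symm
      have sub1 : insert x Z ⊆ insert x X \ I := by
        intro k hk
        rw [memY] at hk
        exact Finset.mem_sdiff.mpr ⟨hk.1, hk.2.1⟩
      have e1 : ∀ i ∈ insert x Z, ∑ j ∈ (insert x Z).erase i, G I i J j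
          = ∑ j ∈ (insert x X) \ J, G I i J j := by
        intro i hi
        refine Finset.sum_subset ?_ ?_
        · intro k hk
          have := (memY k).mp (Finset.mem_of_mem_erase hk)
          exact Finset.mem_sdiff.mpr ⟨this.1, this.2.2⟩
        · intro j hj hj'
          have : j ∈ insert i I := by
            rw [Finset.mem_sdiff] at hj
            rw [Finset.mem_erase, memY] at hj'
            rw [Finset.mem_insert]
            tauto
          simp only [G]
          rw [fp_eq_zero this (Finset.mem_insert_self _ _)]
          simp
      rw [Finset.sum_congr rfl e1]
      refine Finset.sum_subset sub1 ?_
      intro i hi hi'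
      refine Finset.sum_eq_zero fun j _ => ?_
      have : i ∈ insert j J := by
        rw [Finset.mem_sdiff] at hi
        rw [memY] at hi'
        rw [Finset.mem_insert]
        tauto
      simp only [G]
      rw [fp_eq_zero (Finset.mem_insert_self _ _) this]
      simp
    rw [r1, hC Z x hxZ, Finset.smul_sum]
    refine Finset.sum_congr rfl fun i hi => ?_
    rw [Finset.smul_sum]
    refine Finset.sum_congr rfl fun j hj => ?_
    have hi' := (memY i).mp hi
    have hj' := (memY j).mp (Finset.mem_of_mem_erase hj)
    have hij : i ≠ j := (Finset.ne_of_mem_erase hj).symm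
    have hR : R (insert i I) (insert j J) = ((insert x Z).erase i).erase j := by
      ext k
      simp only [R, Finset.mem_sdiff, Finset.mem_union, Finset.mem_erase, memY]
      rw [Finset.mem_insert (a := k) (b := i), Finset.mem_insert (a := k) (b := j)]
      tauto
    simp only [G, al, be]
    rw [hR]
    have key := coef_step h (x := x) (i := i) (j := j) (I := I) (J := J) (Z := Z)
      (R := ((insert x Z).erase i).erase j) (phi c w U I) (phi (-c) w U J) hi'.2.1 hj'.2.2 hij hxZ
      hxI hxJ (by simp) (by simp)
      (by rw [Finset.insert_erase hj, Finset.insert_erase hi])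
    rw [key, smul_smul, Finset.prod_insert hi'.2.1, Finset.prod_insert hj'.2.2]
    congr 1
    ring

end multi

section ops
variable {V : Type*} [AddCommGroup V] [Module ℂ V]

theorem opProd_of_list {p : ℕ} (op : ℂ → Module.End ℂ V) (hcomm : ∀ x y, op x * op y = op y * op x)
    (w : Fin p → ℂ) (S : Finset (Fin p)) (l : List (Fin p)) (hl : l.Nodup) (hS : l.toFinset = S) :
    opProd op w S = (l.map (fun i => op (w i))).prod := by
  unfold opProd
  have hp : (S.sort (· ≤ ·)).Perm l := by
    apply List.perm_of_nodup_nodup_toFinset_eq (Finset.sort_nodup _ _) hl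
    rw [Finset.sort_toFinset, hS]
  refine (hp.map _).prod_eq' ?_
  rw [List.pairwise_map]
  exact List.pairwise_of_forall fun i j => hcomm _ _

theorem opProd_empty {p : ℕ} (op : ℂ → Module.End ℂ V) (w : Fin p → ℂ) :
    opProd op w ∅ = 1 := by
  simp [opProd]

theorem opProd_insert {p : ℕ} (op : ℂ → Module.End ℂ V)
    (hcomm : ∀ x y, op x * op y = op y * op x)
    (w : Fin p → ℂ) (i : Fin p) (S : Finset (Fin p)) (hi : i ∉ S) :
    opProd op w (insert i S) = op (w i) * opProd op w S := by
  rw [opProd_of_list op hcomm w (insert i S) (i :: S.sort (· ≤ ·))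
    (List.nodup_cons.mpr ⟨by simpa using hi, Finset.sort_nodup _ _⟩) (by simp)]
  simp [opProd]

theorem opProd_map {p n : ℕ} (op : ℂ → Module.End ℂ V)
    (hcomm : ∀ x y, op x * op y = op y * op x)
    (w : Fin p → ℂ) (u : Fin n → ℂ) (e : Fin n ↪ Fin p) (hu : ∀ i, u i = w (e i)) :
    opProd op u Finset.univ = opProd op w (Finset.univ.map e) := by
  rw [opProd_of_list op hcomm w (Finset.univ.map e) ((Finset.univ.sort (· ≤ ·)).map e)
    ((Finset.sort_nodup _ _).map e.injective) (by ext; simp)]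
  simp only [opProd, List.map_map]
  congr 2
  funext i
  simp [hu]

end ops

/-- Scalar product of Bethe vectors as a sum over partitions of the combined tuple
`w̄ = {ū, v̄}` into two subtuples of cardinality `n` (Theorem `SC` of the paper). -/
theorem stmt0
    (c : ℂ) (hc : c ≠ 0)
    (V : Type*) [AddCommGroup V] [Module ℂ V]
    (T : Fin 2 → Fin 2 → ℂ → Module.End ℂ V)
    (vac : V) (lam1 lam2 : ℂ → ℂ) (vacDual : V →ₗ[ℂ] ℂ)
    (hYang : ∀ (i j k l : Fin 2) (x y : ℂ), x ≠ y →
      T i j x * T k l y - T k l y * T i j x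
        = gC c x y • (T k j y * T i l x - T k j x * T i l y))
    (hCommSame : ∀ (i j : Fin 2) (x y : ℂ), T i j x * T i j y = T i j y * T i j x)
    (hvac11 : ∀ x : ℂ, T 0 0 x vac = lam1 x • vac)
    (hvac22 : ∀ x : ℂ, T 1 1 x vac = lam2 x • vac)
    (hvac21 : ∀ x : ℂ, T 1 0 x vac = 0)
    (hdual11 : ∀ (x : ℂ) (y : V), vacDual (T 0 0 x y) = lam1 x * vacDual y)
    (hdual22 : ∀ (x : ℂ) (y : V), vacDual (T 1 1 x y) = lam2 x * vacDual y)
    (hdual12 : ∀ (x : ℂ) (y : V), vacDual (T 0 1 x y) = 0)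
    (hnorm : vacDual vac = 1)
    (n : ℕ) (u v : Fin n → ℂ)
    (hgen : Generic c (Fin.append u v)) :
    vacDual ((opProd (T 1 0) u Finset.univ * opProd (T 0 1) v Finset.univ) vac)
      = ∑ s ∈ Finset.powersetCard n (Finset.univ : Finset (Fin (n + n))),
          (∏ i ∈ s, lam2 (Fin.append u v i)) *
            (∏ i ∈ sᶜ, lam1 (Fin.append u v i)) *
            KIz c 1 u (fun i => restr (Fin.append u v) s i + c) *
            KIzBar c 1 u (fun i => restr (Fin.append u v) sᶜ i - c) *
            fSS c (Fin.append u v) s sᶜ := by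
  classical
  set w := Fin.append u v with hw
  have h : Gen c w := ⟨hc, fun i j hij => ⟨(hgen i j hij).1, fun h0 =>
    (hgen i j hij).2.2.1 (by linear_combination h0)⟩⟩
  let eu : Fin n ↪ Fin (n + n) := ⟨Fin.castAdd n, Fin.castAdd_injective n n⟩
  let ev : Fin n ↪ Fin (n + n) := ⟨Fin.natAdd n, Fin.natAdd_injective n n⟩
  have hu : ∀ i, u i = w (eu i) := fun i => by simp [hw, eu]
  have hv : ∀ i, v i = w (ev i) := fun i => (Fin.append_right u v i).symm
  set U : Finset (Fin (n + n)) := Finset.univ.map eu with hU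
  set W : Finset (Fin (n + n)) := Finset.univ.map ev with hW
  have hUW : U ∪ W = Finset.univ := by
    ext i
    simp only [Finset.mem_union, Finset.mem_univ, iff_true, hU, hW, Finset.mem_map, true_and]
    refine Fin.addCases (fun j => Or.inl ⟨j, rfl⟩) (fun j => Or.inr ⟨j, rfl⟩) i
  have hcU : U.card = n := by simp [hU]
  have hcW : W.card = n := by simp [hW]
  have hdis : Disjoint U W := by
    rw [← Finset.card_union_eq_card_add_card, hUW, hcU, hcW]; simp
  have wne : ∀ i j, i ≠ j → w i ≠ w j := fun i j hij => sub_ne_zero.mp (h.2 i j hij).1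
  let BV : Finset (Fin (n + n)) → V := fun S => opProd (T 0 1) w S vac
  have hBi : ∀ i S, i ∉ S → BV (insert i S) = T 0 1 (w i) (BV S) := by
    intro i S hi
    simp only [BV]
    rw [opProd_insert _ (hCommSame 0 1) w i S hi, Module.End.mul_apply]
  have hB0 : BV ∅ = vac := by simp [BV, opProd_empty]
  have hAct := C_action h (fun i => T 0 0 (w i)) (fun i => T 0 1 (w i)) (fun i => T 1 0 (w i))
    (fun i => T 1 1 (w i)) BV (fun i => lam1 (w i)) (fun i => lam2 (w i)) hBi
    (fun i => by rw [hB0]; exact hvac11 _) (fun i => by rw [hB0]; exact hvac22 _)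
    (fun i => by rw [hB0]; exact hvac21 _)
    (by
      intro i j x hij
      have := congrArg (fun f => f x) (hYang 0 1 0 0 (w j) (w i) (wne j i hij.symm))
      simp only [gC, LinearMap.sub_apply, LinearMap.smul_apply, Module.End.mul_apply] at this
      beta_reduce
      refine (sub_sub_cancel (T 0 1 (w j) (T 0 0 (w i) x)) (T 0 0 (w i) (T 0 1 (w j) x))).symm.trans ?_
      rw [this, add_smul, one_smul, smul_sub]
      abel)
    (by
      intro i j x hij
      have := congrArg (fun f => f x) (hYang 1 1 0 1 (w i) (w j) (wne i j hij))
      simp only [gC, LinearMap.sub_apply, LinearMap.smul_apply, Module.End.mul_apply] at this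
      rw [sub_eq_iff_eq_add] at this
      simp only [this, add_smul, one_smul, smul_sub]
      abel)
    (by
      intro i j x hij
      have := congrArg (fun f => f x) (hYang 1 0 0 1 (w i) (w j) (wne i j hij))
      simp only [gC, LinearMap.sub_apply, LinearMap.smul_apply, Module.End.mul_apply] at this
      rw [sub_eq_iff_eq_add] at this
      simp only [this]
      abel)
  have hmain := multi_action h (fun i => T 1 0 (w i)) BV (fun S => opProd (T 1 0) w S)
    (fun i => lam1 (w i)) (fun i => lam2 (w i)) hAct (opProd_empty _ _)
    (fun i S hi => opProd_insert _ (hCommSame 1 0) w i S hi) W U hdis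
  rw [opProd_map (T 1 0) (hCommSame 1 0) w u eu hu, opProd_map (T 0 1) (hCommSame 0 1) w v ev hv,
    Module.End.mul_apply, ← hU, ← hW]
  change vacDual (opProd (T 1 0) w U (BV W)) = _
  rw [hmain, map_sum, hcU, hUW]
  refine Finset.sum_congr rfl fun I hI => ?_
  have hIc : I.card = n := (Finset.mem_powersetCard.mp hI).2
  have hIcc : (Iᶜ).card = n := by rw [Finset.card_compl, hIc]; simp
  rw [map_sum, Finset.sum_eq_single Iᶜ]
  · have he : (Finset.univ : Finset (Fin (n + n))) \ (I ∪ Iᶜ) = ∅ := by simp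
    rw [he, fp_empty_left, fp_empty_right, map_smul, hB0, hnorm,
      KIz_eq_phi h u eu hu I]
    have hk : KIzBar c 1 u (fun i => restr w Iᶜ i - c) = phi (-c) w U Iᶜ := by
      unfold KIzBar
      simp only [sub_eq_add_neg]
      exact KIz_eq_phi h.neg u eu hu Iᶜ
    rw [hk, smul_eq_mul]
    change _ = _ * _ * _ * _ * fp c w I Iᶜ
    rw [← hU]
    ring
  · intro J hJ hne
    have hJc : J.card = n := (Finset.mem_powersetCard.mp hJ).2
    have hnon : ((Finset.univ : Finset (Fin (n + n))) \ (I ∪ J)).Nonempty := by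
      rw [Finset.nonempty_iff_ne_empty]
      intro he
      apply hne
      symm
      apply Finset.eq_of_subset_of_card_le
      · intro k hk
        rw [Finset.sdiff_eq_empty_iff_subset] at he
        have := he (Finset.mem_univ k)
        rw [Finset.mem_union] at this
        rw [Finset.mem_compl] at hk
        tauto
      · rw [hJc, hIcc]
    obtain ⟨k, hk⟩ := hnon
    rw [map_smul, ← Finset.insert_erase hk, hBi _ _ (Finset.notMem_erase _ _), hdual12, smul_zero]
  · intro hn
    exact absurd (Finset.mem_powersetCard.mpr ⟨Finset.subset_univ _, hIcc⟩) hn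
end
end

section
/- For every n ≥ 0 and generic tuples ū, v̄ of length n, the scalar product of Bethe vectors has the Izergin–Korepin form ⟨0|( t_{21}(ū) t_{12}(v̄) |0⟩ ) = Σ λ_2(ū_I)·λ_2(v̄_II)·λ_1(ū_II)·λ_1(v̄_I)·K_{n_2}(v̄_II | ū_II)·\bar{K}_{n_1}(v̄_I | ū_I)·f(ū_I, ū_II)·f(v̄_II, v̄_I), where the sum runs over all pairs of partitions ū ⇒ {ū_I, ū_II} and v̄ ⇒ {v̄_I, v̄_II} with #ū_I = #v̄_I = n_1 (hence #ū_II = #v̄_II = n_2 = n − n_1), for n_1 = 0, 1, …, n. -/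
open scoped BigOperators

noncomputable section

theorem cauchy_fin (c : ℂ) (hc : c ≠ 0) (n : ℕ) (y : Fin n → ℂ)
    (h1 : ∀ i j, i ≠ j → y i - y j + c ≠ 0) :
    (Matrix.of fun j k : Fin n => (hC c (y j) (y k))⁻¹).det
      = ∏ j, ∏ k ∈ Finset.univ.erase j, (fC c (y j) (y k))⁻¹ := by
  induction n with
  | zero => simp
  | succ n ih =>
    have h1' : ∀ i j, y i - y j + c ≠ 0 := by
      intro i j
      by_cases h : i = j
      · simpa [h] using hc
      · exact h1 i j h
    have key : (Matrix.of fun j k : Fin (n+1) => (hC c (y j) (y k))⁻¹).det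
       = (Matrix.of fun j k : Fin (n+1) => if j = 0 then (hC c (y 0) (y k))⁻¹ else
          (hC c (y j) (y k))⁻¹ * (fC c (y j) (y 0))⁻¹ * (fC c (y 0) (y k))⁻¹).det := by
      apply Matrix.det_eq_of_forall_row_eq_smul_add_const
        (fun j => if j = 0 then 0 else (hC c (y j) (y 0))⁻¹) 0 (by simp)
      intro i j
      by_cases hi : i = 0
      · simp [hi]
      · have a1 := h1' i j
        have a2 := h1' i 0
        have a3 := h1' 0 j
        simp only [Matrix.of_apply, hi, if_false, if_true, hC, fC, inv_div]
        field_simp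
        ring
    rw [key, Matrix.det_succ_column_zero, Fin.sum_univ_succ]
    have z : ∀ i : Fin n, (Matrix.of fun j k : Fin (n+1) => if j = 0 then (hC c (y 0) (y k))⁻¹ else
          (hC c (y j) (y k))⁻¹ * (fC c (y j) (y 0))⁻¹ * (fC c (y 0) (y k))⁻¹) i.succ 0 = 0 := by
      intro i
      simp [fC]
    simp only [z, mul_zero, zero_mul, Finset.sum_const_zero, add_zero]
    have e : (Matrix.of fun j k : Fin (n+1) => if j = 0 then (hC c (y 0) (y k))⁻¹ else
          (hC c (y j) (y k))⁻¹ * (fC c (y j) (y 0))⁻¹ * (fC c (y 0) (y k))⁻¹).submatrix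
          (Fin.succAbove 0) Fin.succ = Matrix.of (fun j k : Fin n =>
            (fC c (y j.succ) (y 0))⁻¹ * (Matrix.of fun j k : Fin n =>
              (fC c (y 0) (y k.succ))⁻¹ * (Matrix.of fun j k : Fin n => 
            (hC c (y j.succ) (y k.succ))⁻¹) j k) j k) := by
      ext j k
      simp
      ring
    rw [e, Matrix.det_mul_column, Matrix.det_mul_row, ih (fun j => y j.succ)]
    · have d0 : hC c (y 0) (y 0) = 1 := by simp [hC, hc]
      rw [Fin.prod_univ_succ]
      have e0 : (Finset.univ.erase (0 : Fin (n+1))) = Finset.univ.map (Fin.succEmb n) := by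
        ext i; cases i using Fin.cases <;> simp [Fin.succ_ne_zero]
      have e1 : ∀ i : Fin n, Finset.univ.erase i.succ =
          insert 0 ((Finset.univ.erase i).map (Fin.succEmb n)) := by
        intro i
        ext k; cases k using Fin.cases <;> simp [(Fin.succ_ne_zero _).symm]
      rw [e0]
      simp only [e1]
      have e2 : ∀ i : Fin n, ∏ k ∈ insert 0 ((Finset.univ.erase i).map (Fin.succEmb n)),
        (fC c (y i.succ) (y k))⁻¹ = (fC c (y i.succ) (y 0))⁻¹ * 
          ∏ k ∈ Finset.univ.erase i, (fC c (y i.succ) (y k.succ))⁻¹ := by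
        intro i
        rw [Finset.prod_insert (by simp), Finset.prod_map]
        rfl
      simp only [e2, Finset.prod_map, Finset.prod_mul_distrib, Fin.coe_succEmb]
      simp [d0]
      ring
    · intro i j hij
      exact h1 _ _ (by simpa using hij)

theorem cauchy_fintype (c : ℂ) (hc : c ≠ 0) {κ : Type*} [Fintype κ] [DecidableEq κ] (y : κ → ℂ)
    (h1 : ∀ i j, i ≠ j → y i - y j + c ≠ 0) :
    (Matrix.of fun j k : κ => (hC c (y j) (y k))⁻¹).det
      = ∏ j, ∏ k ∈ Finset.univ.erase j, (fC c (y j) (y k))⁻¹ := by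
  have e := Fintype.equivFin κ
  rw [← Matrix.det_submatrix_equiv_self e.symm]
  have := cauchy_fin c hc _ (fun i => y (e.symm i))
    (fun i j hij => h1 _ _ (by simpa using hij))
  refine Eq.trans ?_ (this.trans ?_)
  · rfl
  · rw [← Equiv.prod_comp e.symm]
    refine Finset.prod_congr rfl fun j _ => ?_
    refine Finset.prod_bij (fun a _ => e.symm a) ?_ ?_ ?_ ?_
    · simp
    · simp
    · intro b hb
      exact ⟨e b, by simpa [Equiv.eq_symm_apply] using hb, by simp⟩
    · simp

theorem KIz_expand (c : ℂ) (hc : c ≠ 0) {ι κ : Type*} [Fintype ι] [Fintype κ] [DecidableEq κ]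
    (x : ι → ℂ) (y : κ → ℂ)
    (h0 : ∀ i j, i ≠ j → y i - y j ≠ 0)
    (h1 : ∀ i j, i ≠ j → y i - y j + c ≠ 0) :
    KIz c 1 x y = ∑ S : Finset κ, (-1) ^ (Sᶜ).card * (∏ i, ∏ j ∈ S, fC c (x i) (y j)) *
      ∏ j ∈ S, ∏ i ∈ Sᶜ, fC c (y j) (y i) := by
  classical
  set G : κ → ℂ := fun j => (∏ i, fC c (x i) (y j)) * (∏ i ∈ Finset.univ.erase j, fC c (y j) (y i))
  set M : Matrix κ κ ℂ := Matrix.of fun j k => G j * (hC c (y j) (y k))⁻¹ with hM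
  have e : KIz c 1 x y = Matrix.detRowAlternating (fun i => M i + (-1 : Matrix κ κ ℂ) i) := by
    unfold KIz
    change Matrix.det _ = Matrix.det _
    congr 1
    ext j k
    simp only [hM, G, Matrix.of_apply, Pi.add_apply, Matrix.neg_apply, Matrix.one_apply,
      div_eq_mul_inv]
    ring
  rw [e]
  erw [(Matrix.detRowAlternating (n := κ) (R := ℂ)).map_add_univ (fun i => M i)
    (fun i => (-1 : Matrix κ κ ℂ) i)]
  refine Finset.sum_congr rfl fun S _ => ?_
  have h_smul : S.piecewise (fun i ↦ M i) (fun i ↦ (-1 : Matrix κ κ ℂ) i) =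
        fun i => (if i ∈ S then (1 : ℂ) else -1) •
              S.piecewise (fun i ↦ M i) (fun i ↦ (1 : Matrix κ κ ℂ) i) i := by
    funext i j
    by_cases h : i ∈ S <;> simp [h]
  rw [h_smul, (Matrix.detRowAlternating (n := κ) (R := ℂ)).map_smul_univ]
  have hd : Matrix.detRowAlternating (S.piecewise (fun i ↦ M i) (fun i ↦ (1 : Matrix κ κ ℂ) i))
      = (M.submatrix (Subtype.val : S → κ) (Subtype.val : S → κ)).det :=
    Matrix.det_piecewise_one_eq_submatrix_det M S
  rw [hd]
  have hs : (M.submatrix (Subtype.val : S → κ) (Subtype.val : S → κ)) =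
    Matrix.of (fun j k : S => G j * (Matrix.of fun j k : S => (hC c (y j) (y k))⁻¹) j k) := by
    ext j k; simp [hM]
  rw [hs, Matrix.det_mul_column, cauchy_fintype c hc (fun j : S => y j)
    (fun i j hij => h1 _ _ (fun h => hij (Subtype.ext h)))]
  have hsgn : (∏ i, if i ∈ S then (1 : ℂ) else -1) = (-1) ^ (Sᶜ).card := by
    rw [Finset.prod_ite]
    simp only [Finset.prod_const_one, one_mul, Finset.prod_const]
    congr 2
    ext i; simp
  rw [hsgn, smul_eq_mul, mul_assoc]
  congr 1
  rw [← Finset.prod_mul_distrib, Finset.prod_comm, ← Finset.prod_mul_distrib]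
  rw [← Finset.prod_coe_sort S]
  refine Finset.prod_congr rfl fun j _ => ?_
  simp only [G]
  rw [mul_assoc]
  congr 1
  have hsplit : Finset.univ.erase (j : κ) = S.erase j ∪ Sᶜ := by
    ext k
    have := j.2
    by_cases hk : k ∈ S <;> simp [hk]
    rintro rfl; exact hk this
  have hdisj : Disjoint (S.erase (j : κ)) Sᶜ := by
    rw [Finset.disjoint_left]; intro a; simp
  rw [hsplit, Finset.prod_union hdisj]
  have hr : ∏ k ∈ Finset.univ.erase j, (fC c (y j) (y (k : S)))⁻¹
      = ∏ k ∈ S.erase (j : κ), (fC c (y j) (y k))⁻¹ := by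
    refine Finset.prod_bij (fun a _ => a.1) ?_ ?_ ?_ ?_
    · intro a ha; simp at ha ⊢; exact fun h => ha h
    · intro a _ b _ h; exact Subtype.ext h
    · intro b hb
      simp at hb
      exact ⟨⟨b, hb.2⟩, by simp [Subtype.ext_iff, hb.1], rfl⟩
    · simp
  rw [hr, mul_right_comm, ← Finset.prod_mul_distrib]
  rw [Finset.prod_eq_one (s := S.erase (j : κ)), one_mul]
  intro k hk
  simp at hk
  apply mul_inv_cancel₀
  have hjk : (j : κ) ≠ k := fun h => hk.1 h.symm
  exact div_ne_zero (h1 _ _ hjk) (h0 _ _ hjk)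



/-- Double product of `f` over two index sets. -/
def f2 (c : ℂ) {ι : Type*} (w : ι → ℂ) (s t : Finset ι) : ℂ :=
  ∏ i ∈ s, ∏ j ∈ t, fC c (w i) (w j)

/-- The Izergin determinant as a sum over subsets. -/
def KF (c : ℂ) {ι : Type*} [DecidableEq ι] (w : ι → ℂ) (x y : Finset ι) : ℂ :=
  ∑ S ∈ y.powerset, (-1) ^ (y \ S).card * f2 c w x S * f2 c w S (y \ S)

/-- Working genericity. -/
def Gen2 (c : ℂ) {ι : Type*} (w : ι → ℂ) : Prop :=
  ∀ i j, i ≠ j → w i - w j ≠ 0 ∧ w i - w j + c ≠ 0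

section comb
variable {c : ℂ} {ι : Type*} {w : ι → ℂ}

theorem fC_ne (hg : Gen2 c w) {i j : ι} (h : i ≠ j) : fC c (w i) (w j) ≠ 0 :=
  div_ne_zero (hg i j h).2 (hg i j h).1

theorem f2_ne (hg : Gen2 c w) {s t : Finset ι} (h : Disjoint s t) : f2 c w s t ≠ 0 := by
  refine Finset.prod_ne_zero_iff.2 fun i hi => Finset.prod_ne_zero_iff.2 fun j hj => ?_
  exact fC_ne hg (fun e => Finset.disjoint_left.1 h hi (e ▸ hj))

variable [DecidableEq ι]

theorem f2_insert_left {a : ι} {s t : Finset ι} (h : a ∉ s) :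
    f2 c w (insert a s) t = f2 c w {a} t * f2 c w s t := by
  simp [f2, Finset.prod_insert h]

theorem f2_insert_right {a : ι} {s t : Finset ι} (h : a ∉ t) :
    f2 c w s (insert a t) = f2 c w s {a} * f2 c w s t := by
  simp [f2, Finset.prod_insert h, Finset.prod_mul_distrib]

theorem f2_erase_left {a : ι} {s t : Finset ι} (h : a ∈ s) :
    f2 c w s t = f2 c w {a} t * f2 c w (s.erase a) t := by
  rw [← f2_insert_left (Finset.notMem_erase a s), Finset.insert_erase h]

theorem f2_erase_right {a : ι} {s t : Finset ι} (h : a ∈ t) :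
    f2 c w s t = f2 c w s {a} * f2 c w s (t.erase a) := by
  rw [← f2_insert_right (Finset.notMem_erase a t), Finset.insert_erase h]

theorem erase_disjSum_inl {s t : Finset ι} (a : ι) :
    (s.disjSum t).erase (Sum.inl a) = (s.erase a).disjSum t := by
  ext (i | i) <;> simp

theorem erase_disjSum_inr {s t : Finset ι} (a : ι) :
    (s.disjSum t).erase (Sum.inr a) = s.disjSum (t.erase a) := by
  ext (i | i) <;> simp

theorem pf2 (hg : Gen2 c w) {Z : Finset ι} {u : ι} (hu : u ∉ Z) :
    ∑ s ∈ Z, f2 c w {s} (Z.erase s) * gC c (w s) (w u) = 1 - f2 c w {u} Z := by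
  have hinj : Set.InjOn w (insert u Z : Finset ι) := by
    intro i _ j _ h
    by_contra hij
    exact (hg i j hij).1 (sub_eq_zero.2 h)
  set P : Polynomial ℂ := ∏ z ∈ Z, (Polynomial.X - Polynomial.C (w z - c)) with hP
  have hm : P.Monic := Polynomial.monic_prod_of_monic _ _ fun i _ => Polynomial.monic_X_sub_C _
  have hd : P.natDegree = Z.card := by
    rw [hP, Polynomial.natDegree_prod_of_monic _ _ fun i _ => Polynomial.monic_X_sub_C _]
    simp only [Polynomial.natDegree_X_sub_C]
    simp
  have hcard : (insert u Z).card = Z.card + 1 := Finset.card_insert_of_notMem hu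
  have := Lagrange.coeff_eq_sum (P := P) hinj (by
    rw [Polynomial.degree_eq_natDegree hm.ne_zero, hd, hcard]; norm_cast; omega)
  rw [hcard, Nat.add_sub_cancel, ← hd, hm.coeff_natDegree, Finset.sum_insert hu,
    Finset.erase_insert hu] at this
  have e1 : Polynomial.eval (w u) P / ∏ j ∈ Z, (w u - w j) = f2 c w {u} Z := by
    simp [hP, f2, Polynomial.eval_prod, fC, Finset.prod_div_distrib]
    congr 1
    exact Finset.prod_congr rfl fun i _ => by ring
  rw [e1] at this
  rw [this, add_sub_cancel_left]
  refine Finset.sum_congr rfl fun s hs => ?_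
  have hsu : s ≠ u := fun h => hu (h ▸ hs)
  rw [Finset.erase_insert_of_ne hsu.symm, Finset.prod_insert (by simp [hu])]
  simp only [hP, f2, Polynomial.eval_prod, fC, Finset.prod_div_distrib, Finset.prod_singleton, gC]
  rw [← Finset.mul_prod_erase Z _ hs]
  simp only [Polynomial.eval_sub, Polynomial.eval_X, Polynomial.eval_C]
  have : ∀ i, w s - (w i - c) = w s - w i + c := fun i => by ring
  simp only [this, sub_self, zero_add]
  rw [div_mul_div_comm]
  ring

theorem pf1 (hc : c ≠ 0) (hg : Gen2 c w) {x S : Finset ι} {u : ι} (hxS : Disjoint x S)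
    (hu : u ∉ S) :
    ∑ a ∈ x, f2 c w {a} (x.erase a) * (f2 c w {a} S)⁻¹ * (hC c (w a) (w u))⁻¹
      + (∏ i ∈ x, (fC c (w i) (w u))⁻¹) * f2 c w S {u}
    = 1 + ∑ s ∈ S, (∏ i ∈ x, (fC c (w i) (w s))⁻¹) * f2 c w (S.erase s) {s} *
        gC c (w s) (w u) := by
  set v : ι ⊕ ι → ℂ := Sum.elim w (fun i => w i - c) with hv
  have hxne : ∀ a ∈ x, ∀ s ∈ insert u S, w a - w s + c ≠ 0 := by
    intro a ha s hs h
    by_cases e : a = s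
    · subst e; simp [hc] at h
    · exact (hg _ _ e).2 h
  have hinj : Set.InjOn v (x.disjSum (insert u S) : Finset (ι ⊕ ι)) := by
    rintro (i | i) hi (j | j) hj h
    · by_contra hij
      exact (hg i j (by simpa using hij)).1 (sub_eq_zero.2 h)
    · exfalso
      simp only [Finset.mem_coe, Finset.inl_mem_disjSum, Finset.inr_mem_disjSum] at hi hj
      refine hxne i hi j hj ?_
      simp only [hv, Sum.elim_inl, Sum.elim_inr] at h
      rw [h]; ring
    · exfalso
      simp only [Finset.mem_coe, Finset.inl_mem_disjSum, Finset.inr_mem_disjSum] at hi hj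
      refine hxne j hj i hi ?_
      simp only [hv, Sum.elim_inl, Sum.elim_inr] at h
      rw [← h]; ring
    · by_contra hij
      refine (hg i j (by simpa using hij)).1 (sub_eq_zero.2 ?_)
      simpa [hv] using h
  set P : Polynomial ℂ := (∏ z ∈ x, (Polynomial.X - Polynomial.C (w z - c))) *
    ∏ z ∈ S, (Polynomial.X - Polynomial.C (w z)) with hP
  have m1 : (∏ z ∈ x, (Polynomial.X - Polynomial.C (w z - c))).Monic :=
    Polynomial.monic_prod_of_monic _ _ fun i _ => Polynomial.monic_X_sub_C _
  have m2 : (∏ z ∈ S, (Polynomial.X - Polynomial.C (w z))).Monic :=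
    Polynomial.monic_prod_of_monic _ _ fun i _ => Polynomial.monic_X_sub_C _
  have hm : P.Monic := m1.mul m2
  have hd : P.natDegree = x.card + S.card := by
    rw [hP, m1.natDegree_mul m2,
      Polynomial.natDegree_prod_of_monic _ _ fun i _ => Polynomial.monic_X_sub_C _,
      Polynomial.natDegree_prod_of_monic _ _ fun i _ => Polynomial.monic_X_sub_C _]
    simp only [Polynomial.natDegree_X_sub_C]
    simp
  have hcard : (x.disjSum (insert u S)).card = x.card + S.card + 1 := by
    rw [Finset.card_disjSum, Finset.card_insert_of_notMem hu]; ring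
  have := Lagrange.coeff_eq_sum (P := P) hinj (by
    rw [Polynomial.degree_eq_natDegree hm.ne_zero, hd, hcard]; norm_cast; omega)
  rw [hcard, Nat.add_sub_cancel, ← hd, hm.coeff_natDegree, Finset.sum_disjSum,
    Finset.sum_insert hu] at this
  rw [this]
  have hev : ∀ t, P.eval t = (∏ z ∈ x, (t - w z + c)) * ∏ z ∈ S, (t - w z) := by
    intro t
    simp only [hP, Polynomial.eval_mul, Polynomial.eval_prod, Polynomial.eval_sub,
      Polynomial.eval_X, Polynomial.eval_C]
    congr 1
    exact Finset.prod_congr rfl fun i _ => by ring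
  have t1 : ∀ a ∈ x, P.eval (v (Sum.inl a)) / ∏ j ∈ (x.disjSum (insert u S)).erase (Sum.inl a),
      (v (Sum.inl a) - v j) =
      f2 c w {a} (x.erase a) * (f2 c w {a} S)⁻¹ * (hC c (w a) (w u))⁻¹ := by
    intro a ha
    rw [erase_disjSum_inl, Finset.prod_disjSum, Finset.prod_insert hu, hev]
    simp only [hv, Sum.elim_inl, Sum.elim_inr, f2, fC, hC, Finset.prod_singleton,
      Finset.prod_div_distrib]
    rw [← Finset.mul_prod_erase x _ ha]
    have : ∀ i, w a - (w i - c) = w a - w i + c := fun i => by ring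
    simp only [this, sub_self, zero_add, inv_div]
    rw [div_mul_div_comm, div_mul_div_comm]
    ring
  have hprod : ∀ s, (∏ i ∈ x, (fC c (w i) (w s))⁻¹)
      = (∏ i ∈ x, (w s - w i)) / ∏ i ∈ x, (w s - c - w i) := by
    intro s
    rw [← Finset.prod_div_distrib]
    refine Finset.prod_congr rfl fun i _ => ?_
    rw [fC, inv_div, ← neg_div_neg_eq]
    congr 1 <;> ring
  have hx' : ∀ s, ∏ z ∈ x, (w s - c - w z + c) = ∏ z ∈ x, (w s - w z) :=
    fun s => Finset.prod_congr rfl fun i _ => by ring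
  have hf2 : ∀ s (Z : Finset ι), f2 c w Z {s} = 
      (∏ i ∈ Z, (w s - c - w i)) / ∏ i ∈ Z, (w s - c - (w i - c)) := by
    intro s Z
    rw [← Finset.prod_div_distrib]
    refine Finset.prod_congr rfl fun i _ => ?_
    rw [Finset.prod_singleton, fC, ← neg_div_neg_eq]
    congr 1 <;> ring
  have t2 : P.eval (v (Sum.inr u)) / ∏ j ∈ (x.disjSum (insert u S)).erase (Sum.inr u),
      (v (Sum.inr u) - v j) = (∏ i ∈ x, (fC c (w i) (w u))⁻¹) * f2 c w S {u} := by
    rw [erase_disjSum_inr, Finset.prod_disjSum, Finset.erase_insert hu, hev, hprod, hf2]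
    simp only [hv, Sum.elim_inl, Sum.elim_inr, hx']
    rw [div_mul_div_comm]
  have t3 : ∀ s ∈ S, P.eval (v (Sum.inr s)) / ∏ j ∈ (x.disjSum (insert u S)).erase (Sum.inr s),
      (v (Sum.inr s) - v j) = - ((∏ i ∈ x, (fC c (w i) (w s))⁻¹) * f2 c w (S.erase s) {s} *
        gC c (w s) (w u)) := by
    intro s hs
    have hsu : s ≠ u := fun h => hu (h ▸ hs)
    rw [erase_disjSum_inr, Finset.prod_disjSum, Finset.erase_insert_of_ne hsu.symm,
      Finset.prod_insert (by simp [hu]), hev, hprod, hf2]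
    simp only [hv, Sum.elim_inl, Sum.elim_inr, hx']
    rw [← Finset.mul_prod_erase S _ hs, gC, div_mul_div_comm, div_mul_div_comm, ← neg_div]
    congr 1 <;> ring
  rw [Finset.sum_congr rfl t1, t2, Finset.sum_congr rfl t3, Finset.sum_neg_distrib]
  ring

theorem reindex_s1 {y : Finset ι} (Φ : Finset ι → ι → ℂ) :
    ∑ S ∈ y.powerset, ∑ s ∈ S, Φ S s = ∑ S ∈ y.powerset, ∑ s ∈ y \ S, Φ (insert s S) s := by
  rw [Finset.sum_sigma', Finset.sum_sigma']
  refine Finset.sum_bij' (fun p _ => ⟨p.1.erase p.2, p.2⟩) (fun p _ => ⟨insert p.2 p.1, p.2⟩)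
    ?_ ?_ ?_ ?_ ?_
  · rintro ⟨S, s⟩ h
    simp only [Finset.mem_sigma, Finset.mem_powerset] at h
    simp only [Finset.mem_sigma, Finset.mem_powerset, Finset.mem_sdiff]
    exact ⟨(Finset.erase_subset _ _).trans h.1, h.1 h.2, Finset.notMem_erase _ _⟩
  · rintro ⟨S, s⟩ h
    simp only [Finset.mem_sigma, Finset.mem_powerset, Finset.mem_sdiff] at h
    simp only [Finset.mem_sigma, Finset.mem_powerset]
    exact ⟨Finset.insert_subset h.2.1 h.1, Finset.mem_insert_self _ _⟩
  · rintro ⟨S, s⟩ h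
    simp only [Finset.mem_sigma, Finset.mem_powerset] at h
    simp [Finset.insert_erase h.2]
  · rintro ⟨S, s⟩ h
    simp only [Finset.mem_sigma, Finset.mem_powerset, Finset.mem_sdiff] at h
    simp [Finset.erase_insert h.2.2]
  · rintro ⟨S, s⟩ h
    simp only [Finset.mem_sigma, Finset.mem_powerset] at h
    simp [Finset.insert_erase h.2]

theorem keyId (hc : c ≠ 0) (hg : Gen2 c w) {x y : Finset ι} {u : ι} (hxy : Disjoint x y)
    (hu : u ∉ y) :
    ∑ a ∈ x, KF c w (x.erase a) y * f2 c w {a} (x.erase a) * (hC c (w a) (w u))⁻¹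
     = ∑ S ∈ y.powerset, (-1) ^ (y \ S).card * f2 c w x S * f2 c w S (y \ S) *
        (f2 c w {u} (y \ S) - f2 c w S {u} * ∏ i ∈ x, (fC c (w i) (w u))⁻¹) := by
  simp only [KF, Finset.sum_mul]
  rw [Finset.sum_comm]
  have step : ∀ S ∈ y.powerset, 
      ∑ a ∈ x, (-1) ^ (y \ S).card * f2 c w (x.erase a) S * f2 c w S (y \ S) *
        f2 c w {a} (x.erase a) * (hC c (w a) (w u))⁻¹ =
      (-1) ^ (y \ S).card * f2 c w x S * f2 c w S (y \ S) *
        (f2 c w {u} (y \ S) - f2 c w S {u} * ∏ i ∈ x, (fC c (w i) (w u))⁻¹) +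
      ((-1) ^ (y \ S).card * f2 c w x S * f2 c w S (y \ S) * (1 - f2 c w {u} (y \ S)) + 
       ∑ s ∈ S, (-1) ^ (y \ S).card * f2 c w x (S.erase s) * f2 c w S (y \ S) *
         f2 c w (S.erase s) {s} * gC c (w s) (w u)) := by
    intro S hS
    rw [Finset.mem_powerset] at hS
    have hxS : Disjoint x S := hxy.mono_right hS
    have huS : u ∉ S := fun h => hu (hS h)
    have h1 : ∀ a ∈ x, (-1) ^ (y \ S).card * f2 c w (x.erase a) S * f2 c w S (y \ S) *
        f2 c w {a} (x.erase a) * (hC c (w a) (w u))⁻¹ = 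
        (-1) ^ (y \ S).card * f2 c w x S * f2 c w S (y \ S) * 
        (f2 c w {a} (x.erase a) * (f2 c w {a} S)⁻¹ * (hC c (w a) (w u))⁻¹) := by
      intro a ha
      rw [f2_erase_left (t := S) ha]
      have : f2 c w {a} S ≠ 0 := f2_ne hg (hxS.mono_left (by simpa using ha))
      field_simp
    rw [Finset.sum_congr rfl h1, ← Finset.mul_sum, eq_sub_of_add_eq (pf1 hc hg hxS huS)]
    have h2 : ∀ s ∈ S, (-1) ^ (y \ S).card * f2 c w x (S.erase s) * f2 c w S (y \ S) *
         f2 c w (S.erase s) {s} * gC c (w s) (w u) = 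
         (-1) ^ (y \ S).card * f2 c w x S * f2 c w S (y \ S) * 
         ((∏ i ∈ x, (fC c (w i) (w s))⁻¹) * f2 c w (S.erase s) {s} *
        gC c (w s) (w u)) := by
      intro s hs
      rw [f2_erase_right (s := x) hs]
      have e : ∏ i ∈ x, (fC c (w i) (w s))⁻¹ = (f2 c w x {s})⁻¹ := by
        simp [f2]
      have : f2 c w x {s} ≠ 0 := f2_ne hg (hxS.mono_right (by simpa using hs))
      rw [e]
      field_simp
    rw [Finset.sum_congr rfl h2, ← Finset.mul_sum]
    ring
  rw [Finset.sum_congr rfl step, Finset.sum_add_distrib, Finset.sum_add_distrib, reindex_s1,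
    ← Finset.sum_add_distrib, add_eq_left]
  refine Finset.sum_eq_zero fun S hS => ?_
  rw [Finset.mem_powerset] at hS
  have h3 : ∀ s ∈ y \ S, (-1) ^ (y \ insert s S).card * f2 c w x ((insert s S).erase s) *
      f2 c w (insert s S) (y \ insert s S) *
         f2 c w ((insert s S).erase s) {s} * gC c (w s) (w u) = 
       - ((-1) ^ (y \ S).card * f2 c w x S * f2 c w S (y \ S)) * 
        (f2 c w {s} ((y \ S).erase s) * gC c (w s) (w u)) := by
    intro s hs
    have hsS : s ∉ S := (Finset.mem_sdiff.1 hs).2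
    have e : y \ insert s S = (y \ S).erase s := by
      ext i; simp; tauto
    rw [Finset.erase_insert hsS, e, f2_insert_left hsS, f2_erase_right (s := S) hs,
      ← Finset.card_erase_add_one hs]
    ring
  rw [Finset.sum_congr rfl h3, ← Finset.mul_sum, pf2 hg (fun h => hu (Finset.mem_sdiff.1 h).1)]
  ring

/-- Identity (A). -/
theorem keyA (hc : c ≠ 0) (hg : Gen2 c w) {x y : Finset ι} {u : ι} (hxy : Disjoint x y)
    (hu : u ∉ y) (hux : u ∉ x) :
    f2 c w x {u} * ∑ a ∈ x, KF c w (x.erase a) y * f2 c w {a} (x.erase a) *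
      (hC c (w a) (w u))⁻¹ = KF c w x (insert u y) := by
  rw [keyId hc hg hxy hu, KF, Finset.sum_powerset_insert hu, ← Finset.sum_add_distrib,
    Finset.mul_sum]
  refine Finset.sum_congr rfl fun S hS => ?_
  rw [Finset.mem_powerset] at hS
  have huS : u ∉ S := fun h => hu (hS h)
  have e1 : insert u y \ S = insert u (y \ S) := Finset.insert_sdiff_of_notMem _ huS
  have e2 : insert u y \ insert u S = y \ S := by
    ext i; simp only [Finset.mem_sdiff, Finset.mem_insert]
    constructor
    · tauto
    · rintro ⟨h1, h2⟩
      refine ⟨Or.inr h1, ?_⟩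
      rintro (rfl | h)
      · exact hu h1
      · exact h2 h
  have hu' : u ∉ y \ S := fun h => hu (Finset.mem_sdiff.1 h).1
  have e3 : ∏ i ∈ x, (fC c (w i) (w u))⁻¹ = (f2 c w x {u})⁻¹ := by simp [f2]
  have : f2 c w x {u} ≠ 0 := f2_ne hg (by simpa using hux)
  rw [e1, e2, e3, Finset.card_insert_of_notMem hu', f2_insert_left huS, f2_insert_right huS,
    f2_insert_right hu']
  field_simp
  ring

/-- Identity (B). -/
theorem keyB (hc : c ≠ 0) (hg : Gen2 c w) {x y : Finset ι} {u : ι} (hxy : Disjoint x y)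
    (hux : u ∈ x) :
    ∑ a ∈ x, KF c w (x.erase a) y * f2 c w {a} (x.erase a) *
      (hC c (w a) (w u))⁻¹ = f2 c w {u} y * KF c w (x.erase u) y := by
  have hu : u ∉ y := Finset.disjoint_left.1 hxy hux
  rw [keyId hc hg hxy hu, KF, Finset.mul_sum]
  refine Finset.sum_congr rfl fun S hS => ?_
  rw [Finset.mem_powerset] at hS
  have e3 : ∏ i ∈ x, (fC c (w i) (w u))⁻¹ = 0 :=
    Finset.prod_eq_zero hux (by simp [fC])
  have e4 : f2 c w {u} y = f2 c w {u} S * f2 c w {u} (y \ S) := by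
    simp only [f2, Finset.prod_singleton]
    rw [mul_comm, Finset.prod_sdiff hS]
  rw [e3, e4, f2_erase_left (t := S) hux]
  ring

end comb



section neg
variable {c : ℂ} {ι : Type*} {w : ι → ℂ}

theorem fC_neg (a b : ℂ) : fC (-c) a b = fC c b a := by
  rw [fC, fC, ← neg_div_neg_eq]
  congr 1 <;> ring

theorem gC_neg (a b : ℂ) : gC (-c) a b = gC c b a := by
  rw [gC, gC, ← neg_div_neg_eq]
  congr 1 <;> ring

theorem hC_neg (a b : ℂ) : hC (-c) a b = hC c b a := by
  rw [hC, hC, ← neg_div_neg_eq]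
  congr 1 <;> ring

theorem f2_neg (s t : Finset ι) : f2 (-c) w s t = f2 c w t s := by
  simp only [f2, fC_neg]
  rw [Finset.prod_comm]

theorem Gen2.neg (hg : Gen2 c w) : Gen2 (-c) w := by
  intro i j hij
  refine ⟨(hg i j hij).1, fun h => (hg j i hij.symm).2 ?_⟩
  linear_combination -h

end neg

section ops
variable {c : ℂ} {ι : Type*} [DecidableEq ι] {w : ι → ℂ}
variable {V : Type*} [AddCommGroup V] [Module ℂ V]

/-- Product of commuting operators over an index set. -/
def opS (op : ℂ → Module.End ℂ V) (hcomm : ∀ x y, op x * op y = op y * op x) (w : ι → ℂ)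
    (s : Finset ι) : Module.End ℂ V :=
  s.noncommProd (fun i => op (w i)) (fun _ _ _ _ _ => hcomm _ _)

theorem opS_empty (op : ℂ → Module.End ℂ V) (hcomm : ∀ x y, op x * op y = op y * op x)
    (z : V) : opS op hcomm w ∅ z = z := by
  have h : opS op hcomm w ∅ = 1 := Finset.noncommProd_empty _ _
  rw [h]; rfl

theorem opS_erase (op : ℂ → Module.End ℂ V) (hcomm : ∀ x y, op x * op y = op y * op x)
    {s : Finset ι} {a : ι} (ha : a ∈ s) (z : V) :
    op (w a) (opS op hcomm w (s.erase a) z) = opS op hcomm w s z := by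
  rw [← Module.End.mul_apply]
  congr 1
  exact Finset.mul_noncommProd_erase s ha (fun i => op (w i)) _

theorem opS_insert' (op : ℂ → Module.End ℂ V) (hcomm : ∀ x y, op x * op y = op y * op x)
    {s : Finset ι} {a : ι} (ha : a ∉ s) (z : V) :
    opS op hcomm w (insert a s) z = opS op hcomm w s (op (w a) z) := by
  rw [← Module.End.mul_apply]
  congr 1
  exact Finset.noncommProd_insert_of_notMem' s a (fun i => op (w i)) _ ha

theorem actA (hc : c ≠ 0) (hg : Gen2 c w) (A B : ℂ → Module.End ℂ V)
    (hB : ∀ x y, B x * B y = B y * B x)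
    (hAB : ∀ x y, x ≠ y → A x * B y = fC c y x • (B y * A x) - gC c y x • (B x * A y))
    (vac : V) (lam : ℂ → ℂ) (hvac : ∀ x, A x vac = lam x • vac) (n : ℕ) :
    ∀ (E : Finset ι) (u : ι), u ∈ E → E.card = n →
    A (w u) (opS B hB w (E.erase u) vac) =
      ∑ a ∈ E, (lam (w a) * f2 c w (E.erase a) {a} * (hC c (w u) (w a))⁻¹) •
        opS B hB w (E.erase a) vac := by
  induction n with
  | zero =>
    intro E u hu h
    simp [Finset.card_eq_zero.1 h] at hu
  | succ n ih =>
    intro E u hu h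
    by_cases hE : (E.erase u).Nonempty
    · obtain ⟨v, hv⟩ := hE
      obtain ⟨hvu, hvE⟩ := Finset.mem_erase.1 hv
      have huv : u ∈ E.erase v := Finset.mem_erase.2 ⟨hvu.symm, hu⟩
      have hw : w u ≠ w v := fun e => (hg u v hvu.symm).1 (sub_eq_zero.2 e)
      have ext : ∀ v ∈ E, ∀ k : ι → ℂ, B (w v) (∑ a ∈ E.erase v,
          (lam (w a) * f2 c w ((E.erase v).erase a) {a} * k a) •
            opS B hB w ((E.erase v).erase a) vac) = 
          ∑ a ∈ E, (lam (w a) * f2 c w (E.erase a) {a} * ((fC c (w v) (w a))⁻¹ * k a)) •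
            opS B hB w (E.erase a) vac := by
        intro v hvE k
        rw [← Finset.sum_erase E (a := v) (by simp [fC]), map_sum]
        refine Finset.sum_congr rfl fun a ha => ?_
        obtain ⟨hav, haE⟩ := Finset.mem_erase.1 ha
        have hva : v ∈ E.erase a := Finset.mem_erase.2 ⟨hav.symm, hvE⟩
        rw [map_smul, Finset.erase_right_comm, opS_erase B hB hva]
        congr 1
        rw [f2_erase_left (t := {a}) hva]
        have : f2 c w {v} {a} = fC c (w v) (w a) := by simp [f2]
        rw [this]
        have := fC_ne hg hav.symm
        field_simp
      rw [← opS_erase B hB hv, ← Module.End.mul_apply, hAB _ _ hw]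
      simp only [LinearMap.sub_apply, LinearMap.smul_apply, Module.End.mul_apply]
      rw [ih (E.erase u) v hv (by rw [Finset.card_erase_of_mem hu, h]; rfl),
        Finset.erase_right_comm,
        ih (E.erase v) u huv (by rw [Finset.card_erase_of_mem hvE, h]; rfl),
        ext v hvE, ext u hu, Finset.smul_sum, Finset.smul_sum, ← Finset.sum_sub_distrib]
      refine Finset.sum_congr rfl fun a ha => ?_
      rw [smul_smul, smul_smul, ← sub_smul]
      congr 1
      have hne : ∀ i, w i - w a + c ≠ 0 := by
        intro i
        by_cases e : i = a
        · simpa [e] using hc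
        · exact (hg i a e).2
      have h1 := hne u
      have h2 := hne v
      have h3 : w v - w u ≠ 0 := (hg v u hvu).1
      simp only [fC, hC, gC, inv_div]
      field_simp
      ring
    · have : E = {u} := by
        rw [Finset.not_nonempty_iff_eq_empty] at hE
        rw [← Finset.insert_erase hu, hE, insert_empty_eq]
      subst this
      simp [opS, hvac, f2, hC, hc]

theorem actC (hc : c ≠ 0) (hg : Gen2 c w) (A B C D : ℂ → Module.End ℂ V)
    (hB : ∀ x y, B x * B y = B y * B x)
    (hAB : ∀ x y, x ≠ y → A x * B y = fC c y x • (B y * A x) - gC c y x • (B x * A y))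
    (hDB : ∀ x y, x ≠ y → D x * B y = fC c x y • (B y * D x) - gC c x y • (B x * D y))
    (hCB : ∀ x y, x ≠ y → C x * B y = B y * C x + gC c x y • (A y * D x - A x * D y))
    (vac : V) (lam1 lam2 : ℂ → ℂ) (hvac1 : ∀ x, A x vac = lam1 x • vac)
    (hvac2 : ∀ x, D x vac = lam2 x • vac) (hvac3 : ∀ x, C x vac = 0) (n : ℕ) :
    ∀ (E : Finset ι) (u : ι), u ∈ E → E.card = n →
    C (w u) (opS B hB w (E.erase u) vac) =
      ∑ a ∈ E, ∑ b ∈ E.erase a, (lam2 (w a) * lam1 (w b) * f2 c w {a} (E.erase a) *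
        f2 c w ((E.erase a).erase b) {b} *
        ((hC c (w a) (w u))⁻¹ * (hC c (w u) (w b))⁻¹)) •
        opS B hB w ((E.erase a).erase b) vac := by
  have aA := fun E u hu => actA hc hg A B hB hAB vac lam1 hvac1 _ E u hu rfl
  have aD : ∀ (E : Finset ι) (u : ι), u ∈ E → 
    D (w u) (opS B hB w (E.erase u) vac) =
      ∑ a ∈ E, (lam2 (w a) * f2 c w {a} (E.erase a) * (hC c (w a) (w u))⁻¹) •
        opS B hB w (E.erase a) vac := by
    intro E u hu
    have := actA (neg_ne_zero.2 hc) hg.neg D B hB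
      (by simpa only [fC_neg, gC_neg] using hDB) vac lam2 hvac2 _ E u hu rfl
    simpa only [f2_neg, hC_neg] using this
  induction n with
  | zero =>
    intro E u hu h
    simp [Finset.card_eq_zero.1 h] at hu
  | succ n ih =>
    intro E u hu h
    by_cases hE : (E.erase u).Nonempty
    · obtain ⟨v, hv⟩ := hE
      obtain ⟨hvu, hvE⟩ := Finset.mem_erase.1 hv
      have huv : u ∈ E.erase v := Finset.mem_erase.2 ⟨hvu.symm, hu⟩
      have hw : w u ≠ w v := fun e => (hg u v hvu.symm).1 (sub_eq_zero.2 e)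
      have hs : ∀ i j, f2 c w {i} {j} = fC c (w i) (w j) := by simp [f2]
      have ext : ∀ u v, u ∈ E → v ∈ E → u ≠ v →
          A (w v) (D (w u) (opS B hB w ((E.erase v).erase u) vac)) =
          ∑ a ∈ E, ∑ b ∈ E.erase a, (lam2 (w a) * lam1 (w b) * f2 c w {a} (E.erase a) *
            f2 c w ((E.erase a).erase b) {b} *
            ((fC c (w a) (w v))⁻¹ * (hC c (w a) (w u))⁻¹ * (hC c (w v) (w b))⁻¹)) •
            opS B hB w ((E.erase a).erase b) vac := by
        intro u v hu hvE huv
        rw [aD (E.erase v) u (Finset.mem_erase.2 ⟨huv, hu⟩),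
          ← Finset.sum_erase E (a := v) (by simp [fC]), map_sum]
        refine Finset.sum_congr rfl fun a ha => ?_
        obtain ⟨hav, haE⟩ := Finset.mem_erase.1 ha
        have hva : v ∈ E.erase a := Finset.mem_erase.2 ⟨hav.symm, hvE⟩
        rw [map_smul, Finset.erase_right_comm, aA (E.erase a) v hva, Finset.smul_sum]
        refine Finset.sum_congr rfl fun b hb => ?_
        rw [smul_smul]
        congr 1
        rw [f2_erase_right (s := {a}) hva, hs]
        have := fC_ne hg hav
        field_simp
      have ext2 : B (w v) (C (w u) (opS B hB w ((E.erase v).erase u) vac)) =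
          ∑ a ∈ E, ∑ b ∈ E.erase a, (lam2 (w a) * lam1 (w b) * f2 c w {a} (E.erase a) *
            f2 c w ((E.erase a).erase b) {b} *
            ((fC c (w a) (w v))⁻¹ * (fC c (w v) (w b))⁻¹ *
              (hC c (w a) (w u))⁻¹ * (hC c (w u) (w b))⁻¹)) •
            opS B hB w ((E.erase a).erase b) vac := by
        rw [ih (E.erase v) u huv (by rw [Finset.card_erase_of_mem hvE, h]; rfl),
          ← Finset.sum_erase E (a := v) (by simp [fC]), map_sum]
        refine Finset.sum_congr rfl fun a ha => ?_
        obtain ⟨hav, haE⟩ := Finset.mem_erase.1 ha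
        have hva : v ∈ E.erase a := Finset.mem_erase.2 ⟨hav.symm, hvE⟩
        rw [map_sum, Finset.erase_right_comm, 
          ← Finset.sum_erase (E.erase a) (a := v) (by simp [fC])]
        refine Finset.sum_congr rfl fun b hb => ?_
        obtain ⟨hbv, hbE⟩ := Finset.mem_erase.1 hb
        have hvb : v ∈ (E.erase a).erase b := Finset.mem_erase.2 ⟨hbv.symm, hva⟩
        rw [map_smul, Finset.erase_right_comm (s := E.erase a) (a := v) (b := b), opS_erase B hB hvb]
        congr 1
        rw [f2_erase_right (s := {a}) hva, f2_erase_left (t := {b}) hvb, hs, hs]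
        have := fC_ne hg hav
        have := fC_ne hg hbv.symm
        field_simp
      rw [← opS_erase B hB hv, ← Module.End.mul_apply, hCB _ _ hw]
      simp only [LinearMap.add_apply, LinearMap.sub_apply, LinearMap.smul_apply,
        Module.End.mul_apply]
      rw [ext v u hvE hu hvu, Finset.erase_right_comm, ext u v hu hvE hvu.symm, ext2,
        ← Finset.sum_sub_distrib, Finset.smul_sum, ← Finset.sum_add_distrib]
      refine Finset.sum_congr rfl fun a ha => ?_
      rw [← Finset.sum_sub_distrib, Finset.smul_sum, ← Finset.sum_add_distrib]
      refine Finset.sum_congr rfl fun b hb => ?_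
      rw [← sub_smul, smul_smul, ← add_smul]
      congr 1
      have hne : ∀ i j, w i - w j + c ≠ 0 := by
        intro i j
        by_cases e : i = j
        · simpa [e] using hc
        · exact (hg i j e).2
      have h1 := hne a u
      have h2 := hne a v
      have h3 := hne u b
      have h4 := hne v b
      have h5 : w u - w v ≠ 0 := (hg u v hvu.symm).1
      simp only [fC, hC, gC, inv_div]
      field_simp
      ring
    · have : E = {u} := by
        rw [Finset.not_nonempty_iff_eq_empty] at hE
        rw [← Finset.insert_erase hu, hE, insert_empty_eq]
      subst this
      simp [opS, hvac3]

end ops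



section recur
variable {c : ℂ} {ι : Type*} [DecidableEq ι] {w : ι → ℂ}

/-- Coefficient of a given product of eigenvalues in the scalar product. -/
def Wc (c : ℂ) (w : ι → ℂ) (U s X : Finset ι) : ℂ :=
  KF c w (s ∩ X) (U \ X) * KF (-c) w (s \ X) (U ∩ X) * f2 c w (U ∩ X) (U \ X) *
    f2 c w (s ∩ X) (s \ X)

theorem f2_union_right {s t t' : Finset ι} (h : Disjoint t t') :
    f2 c w s (t ∪ t') = f2 c w s t * f2 c w s t' := by
  simp [f2, Finset.prod_union h, Finset.prod_mul_distrib]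

theorem f2_union_left {s s' t : Finset ι} (h : Disjoint s s') :
    f2 c w (s ∪ s') t = f2 c w s t * f2 c w s' t := by
  simp [f2, Finset.prod_union h]

theorem stepW (hc : c ≠ 0) (hg : Gen2 c w) {U s X : Finset ι} {u : ι}
    (hU : u ∉ U) (hs : u ∉ s) (hd : Disjoint U s) :
    ∑ a ∈ insert u s ∩ X, ∑ b ∈ insert u s \ X,
      f2 c w {a} ((insert u s).erase a) * f2 c w (((insert u s).erase a).erase b) {b} *
        ((hC c (w a) (w u))⁻¹ * (hC c (w u) (w b))⁻¹) *
        Wc c w U (((insert u s).erase a).erase b) (X.erase a) = Wc c w (insert u U) s X := by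
  have hdE : Disjoint U (insert u s) := by
    rw [Finset.disjoint_insert_right]; exact ⟨hU, hd⟩
  generalize hE : insert u s = E at *
  set P := E ∩ X with hP
  set Q := E \ X with hQ
  have hPQ : Disjoint P Q := Finset.disjoint_left.2 fun i h1 h2 =>
    (Finset.mem_sdiff.1 h2).2 (Finset.mem_inter.1 h1).2
  have hPU : Disjoint P U := (hdE.mono_right Finset.inter_subset_left).symm
  have hQU : Disjoint Q U := (hdE.mono_right Finset.sdiff_subset).symm
  have term : ∀ a ∈ P, ∀ b ∈ Q, 
      f2 c w {a} (E.erase a) * f2 c w ((E.erase a).erase b) {b} *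
        ((hC c (w a) (w u))⁻¹ * (hC c (w u) (w b))⁻¹) *
        Wc c w U ((E.erase a).erase b) (X.erase a) = 
      (f2 c w (U ∩ X) (U \ X) * f2 c w P Q) * 
        ((KF c w (P.erase a) (U \ X) * f2 c w {a} (P.erase a) * (hC c (w a) (w u))⁻¹) *
        (KF (-c) w (Q.erase b) (U ∩ X) * f2 (-c) w {b} (Q.erase b) *
          (hC (-c) (w b) (w u))⁻¹)) := by
    intro a ha b hb
    have haE := (Finset.mem_inter.1 ha).1
    have haX := (Finset.mem_inter.1 ha).2
    have hbE := (Finset.mem_sdiff.1 hb).1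
    have hbX := (Finset.mem_sdiff.1 hb).2
    have haU : a ∉ U := Finset.disjoint_left.1 hPU ha
    have s1 : ((E.erase a).erase b) ∩ (X.erase a) = P.erase a := by
      ext i; simp only [hP, Finset.mem_inter, Finset.mem_erase]; grind
    have s2 : ((E.erase a).erase b) \ (X.erase a) = Q.erase b := by
      ext i; simp only [hQ, Finset.mem_sdiff, Finset.mem_erase]; grind
    have s3 : U ∩ X.erase a = U ∩ X := by
      ext i; simp only [Finset.mem_inter, Finset.mem_erase]; grind
    have s4 : U \ X.erase a = U \ X := by
      ext i; simp only [Finset.mem_sdiff, Finset.mem_erase]; grind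
    have s5 : E.erase a = P.erase a ∪ Q := by
      ext i; simp only [hP, hQ, Finset.mem_union, Finset.mem_inter, Finset.mem_sdiff,
        Finset.mem_erase]; grind
    have s6 : (E.erase a).erase b = P.erase a ∪ Q.erase b := by
      ext i; simp only [hP, hQ, Finset.mem_union, Finset.mem_inter, Finset.mem_sdiff,
        Finset.mem_erase]; grind
    have d1 : Disjoint (P.erase a) Q := hPQ.mono_left (Finset.erase_subset _ _)
    have d2 : Disjoint (P.erase a) (Q.erase b) := d1.mono_right (Finset.erase_subset _ _)
    rw [Wc, s1, s2, s3, s4, s6, s5, f2_union_right d1, f2_union_left d2, f2_neg, hC_neg,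
      f2_erase_left (s := P) (t := Q) ha, f2_erase_right (s := P.erase a) (t := Q) hb]
    ring
  rw [Finset.sum_congr rfl fun a ha => Finset.sum_congr rfl fun b hb => term a ha b hb]
  simp only [← Finset.mul_sum]
  rw [← Finset.sum_mul]
  have hPU2 : Disjoint P (U \ X) := hPU.mono_right Finset.sdiff_subset
  have hQU2 : Disjoint Q (U ∩ X) := hQU.mono_right Finset.inter_subset_left
  have hc' : -c ≠ 0 := neg_ne_zero.2 hc
  have hU1 : u ∉ U ∩ X := fun h => hU (Finset.mem_inter.1 h).1
  have hU2 : u ∉ U \ X := fun h => hU (Finset.mem_sdiff.1 h).1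
  have huE : u ∈ E := hE ▸ Finset.mem_insert_self _ _
  rw [Wc]
  by_cases hX : u ∈ X
  · have huP : u ∈ P := Finset.mem_inter.2 ⟨huE, hX⟩
    have huQ : u ∉ Q := fun h => (Finset.mem_sdiff.1 h).2 hX
    have r1 : s ∩ X = P.erase u := by
      ext i; simp only [hP, ← hE, Finset.mem_inter, Finset.mem_erase, Finset.mem_insert]; grind
    have r2 : s \ X = Q := by
      ext i; simp only [hQ, ← hE, Finset.mem_sdiff, Finset.mem_insert]; grind
    have r3 : insert u U ∩ X = insert u (U ∩ X) := Finset.insert_inter_of_mem hX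
    have r4 : insert u U \ X = U \ X := Finset.insert_sdiff_of_mem _ hX
    rw [r1, r2, r3, r4, keyB hc hg hPU2 huP, ← keyA hc' hg.neg hQU2 hU1 huQ,
      f2_insert_left hU1, f2_neg, f2_erase_left (s := P) (t := Q) huP]
    ring
  · have huQ : u ∈ Q := Finset.mem_sdiff.2 ⟨huE, hX⟩
    have huP : u ∉ P := fun h => hX (Finset.mem_inter.1 h).2
    have r1 : s ∩ X = P := by
      ext i; simp only [hP, ← hE, Finset.mem_inter, Finset.mem_insert]; grind
    have r2 : s \ X = Q.erase u := by
      ext i; simp only [hQ, ← hE, Finset.mem_sdiff, Finset.mem_insert, Finset.mem_erase]; grind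
    have r3 : insert u U ∩ X = U ∩ X := Finset.insert_inter_of_notMem hX
    have r4 : insert u U \ X = insert u (U \ X) := Finset.insert_sdiff_of_notMem _ hX
    rw [r1, r2, r3, r4, keyB hc' hg.neg hQU2 huQ, ← keyA hc hg hPU2 hU2 huP,
      f2_insert_right hU2, f2_neg, f2_erase_right (s := P) (t := Q) huQ]
    ring

theorem reindex3 {U E : Finset ι} (hd : Disjoint U E) (k : ℕ)
    (Φ : ι → ι → Finset ι → ℂ) :
    ∑ a ∈ E, ∑ b ∈ E.erase a, ∑ X ∈ Finset.powersetCard k (U ∪ (E.erase a).erase b), Φ a b X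
    = ∑ X ∈ Finset.powersetCard (k+1) (U ∪ E), ∑ a ∈ E ∩ X, ∑ b ∈ E \ X, Φ a b (X.erase a) := by
  simp only [Finset.sum_sigma']
  refine Finset.sum_bij' (fun p _ => ⟨insert p.1 p.2.2, ⟨p.1, p.2.1⟩⟩)
    (fun p _ => ⟨p.2.1, ⟨p.2.2, p.1.erase p.2.1⟩⟩) ?_ ?_ ?_ ?_ ?_
  · rintro ⟨a, b, X⟩ h
    simp only [Finset.mem_sigma, Finset.mem_powersetCard, Finset.mem_erase] at h
    obtain ⟨ha, ⟨hba, hb⟩, hX, hk⟩ := h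
    have haU : a ∉ U := fun h => Finset.disjoint_left.1 hd h ha
    have hbU : b ∉ U := fun h => Finset.disjoint_left.1 hd h hb
    have haX : a ∉ X := fun h => by have := hX h; simp [haU] at this
    have hbX : b ∉ X := fun h => by have := hX h; simp [hbU] at this
    simp only [Finset.mem_sigma, Finset.mem_powersetCard, Finset.mem_inter, Finset.mem_sdiff,
      Finset.mem_insert, Finset.card_insert_of_notMem haX, hk]
    refine ⟨⟨?_, trivial⟩, ⟨ha, Or.inl trivial⟩, hb, ?_⟩
    · refine Finset.insert_subset (Finset.mem_union_right _ ha) (hX.trans ?_)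
      exact Finset.union_subset_union_right
        ((Finset.erase_subset _ _).trans (Finset.erase_subset _ _))
    · rintro (h | h)
      · exact hba h
      · exact hbX h
  · rintro ⟨X, a, b⟩ h
    simp only [Finset.mem_sigma, Finset.mem_powersetCard, Finset.mem_inter,
      Finset.mem_sdiff] at h
    obtain ⟨⟨hX, hk⟩, ⟨ha, haX⟩, hb, hbX⟩ := h
    have hba : b ≠ a := fun h => hbX (h ▸ haX)
    simp only [Finset.mem_sigma, Finset.mem_powersetCard, Finset.mem_erase]
    refine ⟨ha, ⟨hba, hb⟩, ?_, by rw [Finset.card_erase_of_mem haX, hk]; rfl⟩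
    intro i hi
    obtain ⟨h1, h2⟩ := Finset.mem_erase.1 hi
    have h3 := hX h2
    simp only [Finset.mem_union, Finset.mem_erase] at h3 ⊢
    rcases h3 with h3 | h3
    · exact Or.inl h3
    · exact Or.inr ⟨fun h => hbX (h ▸ h2), h1, h3⟩
  · rintro ⟨a, b, X⟩ h
    simp only [Finset.mem_sigma, Finset.mem_powersetCard, Finset.mem_erase] at h
    obtain ⟨ha, ⟨hba, hb⟩, hX, hk⟩ := h
    have haU : a ∉ U := fun h => Finset.disjoint_left.1 hd h ha
    have haX : a ∉ X := fun h => by have := hX h; simp [haU] at this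
    simp [Finset.erase_insert haX]
  · rintro ⟨X, a, b⟩ h
    simp only [Finset.mem_sigma, Finset.mem_powersetCard, Finset.mem_inter,
      Finset.mem_sdiff] at h
    simp [Finset.insert_erase h.2.1.2]
  · rintro ⟨a, b, X⟩ h
    simp only [Finset.mem_sigma, Finset.mem_powersetCard, Finset.mem_erase] at h
    obtain ⟨ha, ⟨hba, hb⟩, hX, hk⟩ := h
    have haU : a ∉ U := fun h => Finset.disjoint_left.1 hd h ha
    have haX : a ∉ X := fun h => by have := hX h; simp [haU] at this
    simp [Finset.erase_insert haX]

theorem scalar {V : Type*} [AddCommGroup V] [Module ℂ V]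
    (hc : c ≠ 0) (hg : Gen2 c w) (A B C D : ℂ → Module.End ℂ V)
    (hB : ∀ x y, B x * B y = B y * B x) (hC : ∀ x y, C x * C y = C y * C x)
    (hAB : ∀ x y, x ≠ y → A x * B y = fC c y x • (B y * A x) - gC c y x • (B x * A y))
    (hDB : ∀ x y, x ≠ y → D x * B y = fC c x y • (B y * D x) - gC c x y • (B x * D y))
    (hCB : ∀ x y, x ≠ y → C x * B y = B y * C x + gC c x y • (A y * D x - A x * D y))
    (vac : V) (lam1 lam2 : ℂ → ℂ) (hvac1 : ∀ x, A x vac = lam1 x • vac)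
    (hvac2 : ∀ x, D x vac = lam2 x • vac) (hvac3 : ∀ x, C x vac = 0)
    (dual : V →ₗ[ℂ] ℂ) (hnorm : dual vac = 1) (n : ℕ) :
    ∀ U s : Finset ι, Disjoint U s → U.card = n → s.card = n →
    dual (opS C hC w U (opS B hB w s vac)) = ∑ X ∈ Finset.powersetCard n (U ∪ s),
      (∏ i ∈ X, lam2 (w i)) * (∏ i ∈ (U ∪ s) \ X, lam1 (w i)) * Wc c w U s X := by
  induction n with
  | zero =>
    intro U s _ hU hs
    rw [Finset.card_eq_zero] at hU hs
    subst hU hs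
    simp [opS_empty, hnorm, Wc, KF, f2]
  | succ n ih =>
    intro U s hd hUc hsc
    obtain ⟨u, U, hu, rfl, hUc'⟩ := Finset.card_eq_succ.1 hUc
    rw [Finset.disjoint_insert_left] at hd
    obtain ⟨hus, hd⟩ := hd
    have hdE : Disjoint U (insert u s) := by
      rw [Finset.disjoint_insert_right]; exact ⟨hu, hd⟩
    have hac := actC hc hg A B C D hB hAB hDB hCB vac lam1 lam2 hvac1 hvac2 hvac3 _
      (insert u s) u (Finset.mem_insert_self _ _) rfl
    rw [Finset.erase_insert hus] at hac
    rw [opS_insert' C hC hu, hac]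
    simp only [map_sum, map_smul, smul_eq_mul]
    have hcardE : (insert u s).card = n + 2 := by rw [Finset.card_insert_of_notMem hus, hsc]
    have hstep : ∀ a ∈ insert u s, ∀ b ∈ (insert u s).erase a,
        dual (opS C hC w U (opS B hB w (((insert u s).erase a).erase b) vac)) = 
        ∑ X ∈ Finset.powersetCard n (U ∪ ((insert u s).erase a).erase b),
      (∏ i ∈ X, lam2 (w i)) * (∏ i ∈ (U ∪ ((insert u s).erase a).erase b) \ X, lam1 (w i)) *
        Wc c w U (((insert u s).erase a).erase b) X := by
      intro a ha b hb
      apply ih _ _ _ hUc'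
      · rw [Finset.card_erase_of_mem hb, Finset.card_erase_of_mem ha, hcardE]; rfl
      · exact hdE.mono_right ((Finset.erase_subset _ _).trans (Finset.erase_subset _ _))
    rw [Finset.sum_congr rfl fun a ha => Finset.sum_congr rfl fun b hb => by
      rw [hstep a ha b hb, Finset.mul_sum]]
    rw [reindex3 hdE]
    have hset : insert u U ∪ s = U ∪ insert u s := by
      ext i; simp only [Finset.mem_union, Finset.mem_insert]; tauto
    rw [hset]
    refine Finset.sum_congr rfl fun X hX => ?_
    rw [← stepW hc hg hu hus hd, Finset.mul_sum]
    refine Finset.sum_congr rfl fun a ha => ?_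
    rw [Finset.mul_sum]
    refine Finset.sum_congr rfl fun b hb => ?_
    obtain ⟨haE, haX⟩ := Finset.mem_inter.1 ha
    obtain ⟨hbE, hbX⟩ := Finset.mem_sdiff.1 hb
    have haU : a ∉ U := fun h => Finset.disjoint_left.1 hdE h haE
    have hbU : b ∉ U := fun h => Finset.disjoint_left.1 hdE h hbE
    have e1 : (U ∪ ((insert u s).erase a).erase b) \ X.erase a
        = ((U ∪ insert u s) \ X).erase b := by
      generalize insert u s = E at *
      ext i
      simp only [Finset.mem_sdiff, Finset.mem_union, Finset.mem_erase]
      grind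
    have hb' : b ∈ (U ∪ insert u s) \ X :=
      Finset.mem_sdiff.2 ⟨Finset.mem_union_right _ hbE, hbX⟩
    rw [e1, ← Finset.mul_prod_erase X _ haX, ← Finset.mul_prod_erase _ _ hb']
    ring

end recur

theorem KIz_eq_KF (c : ℂ) (hc : c ≠ 0) {ι κ₁ κ₂ : Type*} [DecidableEq ι] [Fintype κ₁]
    [Fintype κ₂] [DecidableEq κ₂] (w : ι → ℂ) (hg : Gen2 c w) (e₁ : κ₁ ↪ ι) (e₂ : κ₂ ↪ ι) :
    KIz c 1 (fun i => w (e₁ i)) (fun i => w (e₂ i)) =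
      KF c w (Finset.univ.map e₁) (Finset.univ.map e₂) := by
  rw [KIz_expand c hc _ _ (fun i j h => (hg _ _ (fun e => h (e₂.injective e))).1)
    (fun i j h => (hg _ _ (fun e => h (e₂.injective e))).2), KF]
  refine Finset.sum_bij (fun S _ => S.map e₂) ?_ ?_ ?_ ?_
  · intro S _
    simp [Finset.map_subset_map]
  · intro S _ S' _ h
    exact Finset.map_injective e₂ h
  · intro T hT
    rw [Finset.mem_powerset, Finset.subset_map_iff] at hT
    obtain ⟨S, -, rfl⟩ := hT
    exact ⟨S, Finset.mem_univ _, rfl⟩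
  · intro S _
    have : Finset.univ.map e₂ \ S.map e₂ = (Sᶜ).map e₂ := by
      rw [Finset.compl_eq_univ_sdiff, Finset.map_sdiff]
    rw [this]
    simp [f2, Finset.prod_map]




theorem opProd_eq_opS {V ι : Type*} [AddCommGroup V] [Module ℂ V] [DecidableEq ι] {n : ℕ}
    (op : ℂ → Module.End ℂ V) (hcomm : ∀ x y, op x * op y = op y * op x)
    (w : ι → ℂ) (e : Fin n ↪ ι) :
    opProd op (fun i => w (e i)) Finset.univ = opS op hcomm w (Finset.univ.map e) := by
  have h1 : ((Finset.univ : Finset (Fin n)).map e)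
      = (((Finset.univ : Finset (Fin n)).sort (· ≤ ·)).map e).toFinset := by
    ext i; simp
  have h2 : (((Finset.univ : Finset (Fin n)).sort (· ≤ ·)).map e).Nodup :=
    (Finset.sort_nodup _ _).map e.injective
  rw [opProd, opS]
  simp only [h1]
  rw [Finset.noncommProd_toFinset _ _ _ h2, List.map_map]
  rfl

theorem final_reindex {n : ℕ} (F : Finset (Fin n ⊕ Fin n) → ℂ) :
    ∑ X ∈ Finset.powersetCard n (Finset.univ : Finset (Fin n ⊕ Fin n)), F X =
      ∑ sU : Finset (Fin n), ∑ sV ∈ Finset.powersetCard sU.card (Finset.univ : Finset (Fin n)),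
        F (sU.disjSum sVᶜ) := by
  rw [Finset.sum_sigma']
  refine Finset.sum_bij' (fun X _ => ⟨X.toLeft, (X.toRight)ᶜ⟩)
    (fun p _ => p.1.disjSum p.2ᶜ) ?_ ?_ ?_ ?_ ?_
  · intro X hX
    have h := (Finset.mem_powersetCard.1 hX).2
    have h2 := Finset.card_toLeft_add_card_toRight (u := X)
    simp only [Finset.mem_sigma, Finset.mem_univ, true_and, Finset.mem_powersetCard,
      Finset.subset_univ, Finset.card_compl, Fintype.card_fin]
    omega
  · rintro ⟨sU, sV⟩ h
    simp only [Finset.mem_sigma, Finset.mem_univ, true_and, Finset.mem_powersetCard,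
      Finset.subset_univ] at h
    have h3 : sV.card ≤ n := by simpa using Finset.card_le_univ sV
    simp only [Finset.mem_powersetCard, Finset.subset_univ, true_and, Finset.card_disjSum,
      Finset.card_compl, Fintype.card_fin]
    omega
  · intro X hX
    simp [Finset.toLeft_disjSum_toRight]
  · rintro ⟨sU, sV⟩ h
    simp
  · intro X hX
    simp [Finset.toLeft_disjSum_toRight]

theorem univ_map_sub {n : ℕ} {ι : Type*} (e : Fin n ↪ ι) (s : Finset (Fin n)) :
    (Finset.univ : Finset {x // x ∈ s}).map ((Function.Embedding.subtype _).trans e)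
      = s.map e := by
  rw [← Finset.map_map]
  congr 1
  ext i; simp

theorem gC_add_one {c x y : ℂ} (h : x ≠ y) : fC c x y = 1 + gC c x y := by
  have : x - y ≠ 0 := sub_ne_zero.2 h
  rw [fC, gC]; field_simp



/-- Izergin--Korepin form of the scalar product of Bethe vectors: a sum over
independent partitions of `ū` and `v̄` with `#ū_I = #v̄_I`. -/
theorem stmt1
    (c : ℂ) (hc : c ≠ 0)
    (V : Type*) [AddCommGroup V] [Module ℂ V]
    (T : Fin 2 → Fin 2 → ℂ → Module.End ℂ V)
    (vac : V) (lam1 lam2 : ℂ → ℂ) (vacDual : V →ₗ[ℂ] ℂ)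
    (hYang : ∀ (i j k l : Fin 2) (x y : ℂ), x ≠ y →
      T i j x * T k l y - T k l y * T i j x
        = gC c x y • (T k j y * T i l x - T k j x * T i l y))
    (hCommSame : ∀ (i j : Fin 2) (x y : ℂ), T i j x * T i j y = T i j y * T i j x)
    (hvac11 : ∀ x : ℂ, T 0 0 x vac = lam1 x • vac)
    (hvac22 : ∀ x : ℂ, T 1 1 x vac = lam2 x • vac)
    (hvac21 : ∀ x : ℂ, T 1 0 x vac = 0)
    (hdual11 : ∀ (x : ℂ) (y : V), vacDual (T 0 0 x y) = lam1 x * vacDual y)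
    (hdual22 : ∀ (x : ℂ) (y : V), vacDual (T 1 1 x y) = lam2 x * vacDual y)
    (hdual12 : ∀ (x : ℂ) (y : V), vacDual (T 0 1 x y) = 0)
    (hnorm : vacDual vac = 1)
    (n : ℕ) (u v : Fin n → ℂ)
    (hgen : Generic c (Fin.append u v)) :
    vacDual ((opProd (T 1 0) u Finset.univ * opProd (T 0 1) v Finset.univ) vac)
      = ∑ sU : Finset (Fin n),
          ∑ sV ∈ Finset.powersetCard sU.card (Finset.univ : Finset (Fin n)),
            (∏ i ∈ sU, lam2 (u i)) * (∏ j ∈ sVᶜ, lam2 (v j)) *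
              (∏ i ∈ sUᶜ, lam1 (u i)) * (∏ j ∈ sV, lam1 (v j)) *
              KIz c 1 (restr v sVᶜ) (restr u sUᶜ) *
              KIzBar c 1 (restr v sV) (restr u sU) *
              fSS c u sU sUᶜ * fSS c v sVᶜ sV := by
  have hg : Gen2 c (Sum.elim u v) := by
    have key : ∀ i : Fin n ⊕ Fin n, Sum.elim u v i = Fin.append u v (finSumFinEquiv i) := by
      rintro (i | i)
      · simp
      · rw [finSumFinEquiv_apply_right, Fin.append_right]; rfl
    intro i j hij
    have h := hgen (finSumFinEquiv i) (finSumFinEquiv j) (fun e => hij (finSumFinEquiv.injective e))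
    rw [key, key]
    refine ⟨h.1, fun e => h.2.2.1 (eq_neg_of_add_eq_zero_left e)⟩
  have hAB : ∀ x y, x ≠ y → T 0 0 x * T 0 1 y
      = fC c y x • (T 0 1 y * T 0 0 x) - gC c y x • (T 0 1 x * T 0 0 y) := by
    intro x y h
    have h1 := hYang 0 1 0 0 y x h.symm
    rw [gC_add_one h.symm, add_smul, one_smul]
    rw [smul_sub, sub_eq_iff_eq_add] at h1
    have h2 := eq_sub_of_add_eq' h1.symm
    rw [h2]; abel
  have hDB : ∀ x y, x ≠ y → T 1 1 x * T 0 1 y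
      = fC c x y • (T 0 1 y * T 1 1 x) - gC c x y • (T 0 1 x * T 1 1 y) := by
    intro x y h
    have h1 := hYang 1 1 0 1 x y h
    rw [gC_add_one h, add_smul, one_smul]
    rw [smul_sub, sub_eq_iff_eq_add] at h1
    rw [h1]; abel
  have hCB : ∀ x y, x ≠ y → T 1 0 x * T 0 1 y
      = T 0 1 y * T 1 0 x + gC c x y • (T 0 0 y * T 1 1 x - T 0 0 x * T 1 1 y) := by
    intro x y h
    have h1 := hYang 1 0 0 1 x y h
    rw [sub_eq_iff_eq_add] at h1
    rw [h1, add_comm]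
  set eL : Fin n ↪ Fin n ⊕ Fin n := Function.Embedding.inl with heL
  set eR : Fin n ↪ Fin n ⊕ Fin n := Function.Embedding.inr with heR
  have hd : Disjoint ((Finset.univ : Finset (Fin n)).map eL) (Finset.univ.map eR) := by
    rw [Finset.disjoint_left]
    rintro (i | i) <;> simp [heL, heR]
  have hun : (Finset.univ : Finset (Fin n)).map eL ∪ Finset.univ.map eR = Finset.univ := by
    ext (i | i) <;> simp [heL, heR]
  have hsc := scalar hc hg (T 0 0) (T 0 1) (T 1 0) (T 1 1) (hCommSame 0 1) (hCommSame 1 0)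
    hAB hDB hCB vac lam1 lam2 hvac11 hvac22 hvac21 vacDual hnorm n _ _ hd (by simp) (by simp)
  have e1 := opProd_eq_opS (T 1 0) (hCommSame 1 0) (Sum.elim u v) eL
  have e2 := opProd_eq_opS (T 0 1) (hCommSame 0 1) (Sum.elim u v) eR
  rw [← e1, ← e2] at hsc
  refine Eq.trans hsc ?_
  rw [hun, final_reindex]
  refine Finset.sum_congr rfl fun sU _ => Finset.sum_congr rfl fun sV _ => ?_
  have i1 : Finset.univ.map eL ∩ sU.disjSum sVᶜ = sU.map eL := by
    ext (i | i) <;> simp [heL]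
  have i2 : Finset.univ.map eL \ sU.disjSum sVᶜ = sUᶜ.map eL := by
    ext (i | i) <;> simp [heL]
  have i3 : Finset.univ.map eR ∩ sU.disjSum sVᶜ = sVᶜ.map eR := by
    ext (i | i) <;> simp [heR]
  have i4 : Finset.univ.map eR \ sU.disjSum sVᶜ = sV.map eR := by
    ext (i | i) <;> simp [heR]
  have i5 : Finset.univ \ sU.disjSum sVᶜ = sUᶜ.disjSum sV := by
    ext (i | i) <;> simp
  have k1 := KIz_eq_KF c hc (Sum.elim u v) hg
    ((Function.Embedding.subtype (fun x => x ∈ sVᶜ)).trans eR)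
    ((Function.Embedding.subtype (fun x => x ∈ sUᶜ)).trans eL)
  have k2 := KIz_eq_KF (-c) (neg_ne_zero.2 hc) (Sum.elim u v) hg.neg
    ((Function.Embedding.subtype (fun x => x ∈ sV)).trans eR)
    ((Function.Embedding.subtype (fun x => x ∈ sU)).trans eL)
  rw [univ_map_sub, univ_map_sub] at k1 k2
  rw [Wc, i1, i2, i3, i4, i5, ← k1, ← k2, Finset.prod_disjSum, Finset.prod_disjSum]
  have j1 : f2 c (Sum.elim u v) (sU.map eL) (sUᶜ.map eL) = fSS c u sU sUᶜ := by
    simp [f2, fSS, heL]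
  have j2 : f2 c (Sum.elim u v) (sVᶜ.map eR) (sV.map eR) = fSS c v sVᶜ sV := by
    simp [f2, fSS, heR]
  rw [j1, j2]
  have m1 : KIz c 1 (restr v sVᶜ) (restr u sUᶜ) = KIz c 1
    (fun i => Sum.elim u v (((Function.Embedding.subtype (fun x => x ∈ sVᶜ)).trans eR) i))
    (fun i => Sum.elim u v (((Function.Embedding.subtype (fun x => x ∈ sUᶜ)).trans eL) i)) := rfl
  have m2 : KIzBar c 1 (restr v sV) (restr u sU) = KIz (-c) 1
    (fun i => Sum.elim u v (((Function.Embedding.subtype (fun x => x ∈ sV)).trans eR) i))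
    (fun i => Sum.elim u v (((Function.Embedding.subtype (fun x => x ∈ sU)).trans eL) i)) := rfl
  rw [m1, m2]
  simp only [Sum.elim_inl, Sum.elim_inr]
  ring
end
end
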